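/- arXiv:1611.09719 — 2 statements merged into one kernel-verified Lean document; each statement's English description precedes it below -/
import Mathlib

section
/- Let ζ₁, ζ₂ > −3 with ζ̄ := ζ₁ + ζ₂ + 3 < 0, let m ∈ ℕ and R > 0. Then there is a constant C, depending only on m, ζ₁, ζ₂ and R (and not on ε), such that for all ε = 2^{−N} with 4mε < 1 and all K₁, K₂ : ε²ℤ × εℤ → ℝ supported in the ball of radius R around the origin: ⦀K₁ ∗_ε K₂⦀_{ζ̄; m}^{(ε)} ≤ C ⦀K₁⦀_{ζ₁; m}^{(ε)} ⦀K₂⦀_{ζ₂; m}^{(ε)}, where (K₁ ∗_ε K₂)(z) := ε³ Σ_{w ∈ ε²ℤ × εℤ} K₁(z−w) K₂(w). -/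
open Real

noncomputable section

/-- Forward time difference `D̄_{t,ε²}` on grid functions (indexed form:
`f m j` is the value at the point `(ε² m, ε j)`). -/
def fdT (ε : ℝ) (f : ℤ → ℤ → ℝ) : ℤ → ℤ → ℝ :=
  fun m j => (f (m + 1) j - f m j) / ε ^ 2

/-- Forward space difference `D̄_{x,ε}` on grid functions. -/
def fdX (ε : ℝ) (f : ℤ → ℤ → ℝ) : ℤ → ℤ → ℝ :=
  fun m j => (f m (j + 1) - f m j) / ε

/-- Iterated forward differences `D̄_ε^k = D̄_{t,ε²}^{k₀} D̄_{x,ε}^{k₁}`. -/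
def fdiff (ε : ℝ) (k₀ k₁ : ℕ) (f : ℤ → ℤ → ℝ) : ℤ → ℤ → ℝ :=
  (fdT ε)^[k₀] ((fdX ε)^[k₁] f)

/-- Parabolic norm `‖z‖_s` of the grid point `z = (ε² m, ε j)`. -/
def snorm (ε : ℝ) (m j : ℤ) : ℝ :=
  max (Real.sqrt |ε ^ 2 * (m : ℝ)|) |ε * (j : ℝ)|

/-- `‖z‖_{s,ε} = ‖z‖_s ∨ ε` for the grid point `z = (ε² m, ε j)`. -/
def snormE (ε : ℝ) (m j : ℤ) : ℝ := max (snorm ε m j) ε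

/-- The grid function `K` is supported in the parabolic ball of radius `R`
around the origin. -/
def SuppIn (ε R : ℝ) (K : ℤ → ℤ → ℝ) : Prop :=
  ∀ m j : ℤ, R < snorm ε m j → K m j = 0

/-- `⦀K⦀_{ζ;m}^{(ε)} ≤ M`, expressed through the defining bounds. -/
def SingBound (ε ζ : ℝ) (m : ℕ) (M : ℝ) (K : ℤ → ℤ → ℝ) : Prop :=
  ∀ k₀ k₁ : ℕ, 2 * k₀ + k₁ ≤ m → ∀ mz j : ℤ,
    |fdiff ε k₀ k₁ K mz j| ≤ M * snormE ε mz j ^ (ζ - (2 * (k₀ : ℝ) + (k₁ : ℝ)))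

/-- The discrete space-time convolution `(K₁ ∗_ε K₂)(z) = ε³ Σ_w K₁(z-w) K₂(w)`
on grid indices. -/
def dconv (ε : ℝ) (K₁ K₂ : ℤ → ℤ → ℝ) : ℤ → ℤ → ℝ :=
  fun m j => ε ^ 3 * ∑' p : ℤ × ℤ, K₁ (m - p.1) (j - p.2) * K₂ p.1 p.2

/-!
Rescaling time by `ε ^ 2` and space by `ε` reduces everything to the lattice `ℤ × ℤ` with `ε = 1`,
where the powers of `ε` cancel and uniformity in `ε` is automatic. There, write
`D ^ k (F ∗ G) z = ∑ u, D ^ k F u * G (z - u)` and split the sum at `‖u‖ = ‖z‖ / 2`.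

* Near the origin, `D ^ k F` is too singular to be summed absolutely, but `z - u` stays away from
  the singularity of `G`. Summation by parts moves the differences onto `G`; its boundary terms live
  where both `u` and `z - u` have size comparable to `‖z‖`.
* Away from the origin, `D ^ k F u` is at most a multiple of `‖z‖ ^ (-|k|) * ‖u‖ ^ ζ₁`, and the
  remaining product of two powers is summable at infinity because `ζ₁ + ζ₂ < -3`.

All sums of powers are estimated on dyadic shells, using that a ball of radius `r` has `O(r ^ 3)`
points.
-/

open Finset fwdDiff

section PolynomialGrowth

variable {α : Type*} {ρ : α → ℝ} {A d : ℝ}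

/-- The function `ρ` has polynomial growth of degree `d`: at most `A * r ^ d` points satisfy
`ρ ≤ r`. Counting finite subsets makes finiteness of the sublevel sets part of the notion. -/
def HasPolynomialGrowth (ρ : α → ℝ) (A d : ℝ) : Prop :=
  ∀ r : ℝ, 0 < r → ∀ U : Finset α, (∀ u ∈ U, ρ u ≤ r) → (#U : ℝ) ≤ A * r ^ d

lemma HasPolynomialGrowth.const_nonneg (hρ : HasPolynomialGrowth ρ A d) : 0 ≤ A := by
  simpa using hρ 1 one_pos ∅ (by simp)

lemma rpow_le_two_rpow_abs_mul_rpow {x r : ℝ} (hr : 0 < r) (hx : r / 2 ≤ x) (hxr : x ≤ r)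
    (ζ : ℝ) : x ^ ζ ≤ 2 ^ |ζ| * r ^ ζ := by
  have hx0 : 0 < x := by linarith
  rcases le_total 0 ζ with hζ | hζ
  · calc x ^ ζ ≤ 1 * r ^ ζ := by rw [one_mul]; exact rpow_le_rpow hx0.le hxr hζ
      _ ≤ 2 ^ |ζ| * r ^ ζ := by gcongr; exact one_le_rpow one_le_two (abs_nonneg ζ)
  · calc x ^ ζ ≤ (r / 2) ^ ζ := rpow_le_rpow_of_nonpos (by positivity) hx hζ
      _ = 2 ^ |ζ| * r ^ ζ := by
        rw [div_rpow hr.le zero_le_two, abs_of_nonpos hζ, rpow_neg zero_le_two]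
        ring

lemma HasPolynomialGrowth.sum_rpow_shell_le (hρ : HasPolynomialGrowth ρ A d) {r : ℝ} (hr : 0 < r)
    (ζ : ℝ) {U : Finset α} (hU : ∀ u ∈ U, r / 2 ≤ ρ u ∧ ρ u ≤ r) :
    ∑ u ∈ U, ρ u ^ ζ ≤ 2 ^ |ζ| * A * r ^ (ζ + d) := by
  calc ∑ u ∈ U, ρ u ^ ζ ≤ #U • (2 ^ |ζ| * r ^ ζ) :=
        sum_le_card_nsmul _ _ _ fun u hu ↦
          rpow_le_two_rpow_abs_mul_rpow hr (hU u hu).1 (hU u hu).2 ζ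
    _ ≤ (A * r ^ d) * (2 ^ |ζ| * r ^ ζ) := by
        rw [nsmul_eq_mul]
        gcongr
        exact hρ r hr U fun u hu ↦ (hU u hu).2
    _ = 2 ^ |ζ| * A * r ^ (ζ + d) := by rw [rpow_add hr]; ring

lemma HasPolynomialGrowth.sum_rpow_le_of_shells (hρ : HasPolynomialGrowth ρ A d) {ζ l r : ℝ}
    (hl : 0 < l) (hl_lt : l ^ (ζ + d) < 1) (hr : 0 < r) {U : Finset α}
    (hU : ∀ u ∈ U, ∃ k : ℕ, r * l ^ k / 2 ≤ ρ u ∧ ρ u ≤ r * l ^ k) :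
    ∑ u ∈ U, ρ u ^ ζ ≤ 2 ^ |ζ| * A / (1 - l ^ (ζ + d)) * r ^ (ζ + d) := by
  classical
  have hA := hρ.const_nonneg
  choose! shell hshell using hU
  have shell_sum_le (k : ℕ) :
      ∑ u ∈ U with shell u = k, ρ u ^ ζ ≤ 2 ^ |ζ| * A * r ^ (ζ + d) * (l ^ (ζ + d)) ^ k := by
    refine (hρ.sum_rpow_shell_le (r := r * l ^ k) (by positivity) ζ ?_).trans_eq ?_
    · intro u hu
      obtain ⟨huU, rfl⟩ := mem_filter.1 hu
      exact hshell u huU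
    · rw [mul_rpow hr.le (by positivity), ← rpow_natCast_mul hl.le, ← rpow_mul_natCast hl.le,
        mul_comm (k : ℝ)]
      ring
  have geometric_sum_le : ∑ k ∈ U.image shell, (l ^ (ζ + d)) ^ k ≤ (1 - l ^ (ζ + d))⁻¹ := by
    rw [← tsum_geometric_of_lt_one (by positivity) hl_lt]
    exact (summable_geometric_of_lt_one (by positivity) hl_lt).sum_le_tsum _
      fun k _ ↦ by positivity
  calc ∑ u ∈ U, ρ u ^ ζ
      = ∑ k ∈ U.image shell, ∑ u ∈ U with shell u = k, ρ u ^ ζ :=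
        (sum_fiberwise_of_maps_to (fun u hu ↦ mem_image_of_mem shell hu) _).symm
    _ ≤ ∑ k ∈ U.image shell, 2 ^ |ζ| * A * r ^ (ζ + d) * (l ^ (ζ + d)) ^ k :=
        sum_le_sum fun k _ ↦ shell_sum_le k
    _ ≤ 2 ^ |ζ| * A * r ^ (ζ + d) * (1 - l ^ (ζ + d))⁻¹ := by
        rw [← mul_sum]
        gcongr
    _ = 2 ^ |ζ| * A / (1 - l ^ (ζ + d)) * r ^ (ζ + d) := by ring

lemma HasPolynomialGrowth.exists_sum_rpow_le_of_le (hρ : HasPolynomialGrowth ρ A d) {ζ : ℝ}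
    (hζ : -d < ζ) :
    ∃ C, 0 ≤ C ∧ ∀ r, 0 < r → ∀ U : Finset α, (∀ u ∈ U, 0 < ρ u ∧ ρ u ≤ r) →
      ∑ u ∈ U, ρ u ^ ζ ≤ C * r ^ (ζ + d) := by
  have ratio_lt : (2⁻¹ : ℝ) ^ (ζ + d) < 1 :=
    rpow_lt_one (by norm_num) (by norm_num) (by linarith)
  refine ⟨2 ^ |ζ| * A / (1 - (2⁻¹ : ℝ) ^ (ζ + d)),
    div_nonneg (mul_nonneg (by positivity) hρ.const_nonneg) (by linarith), fun r hr U hU ↦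
      hρ.sum_rpow_le_of_shells (by norm_num) ratio_lt hr fun u hu ↦ ?_⟩
  obtain ⟨hu0, hur⟩ := hU u hu
  obtain ⟨k, hk, hk'⟩ := exists_nat_pow_near ((one_le_div hu0).2 hur) one_lt_two
  rw [le_div_iff₀ hu0] at hk
  rw [div_lt_iff₀ hu0, pow_succ] at hk'
  refine ⟨k, ?_, ?_⟩ <;> rw [inv_pow, ← div_eq_mul_inv]
  · rw [div_div, div_le_iff₀ (by positivity)]
    linarith
  · rw [le_div_iff₀ (by positivity)]
    linarith

lemma HasPolynomialGrowth.exists_sum_rpow_le_of_ge (hρ : HasPolynomialGrowth ρ A d) {ζ : ℝ}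
    (hζ : ζ < -d) :
    ∃ C, 0 ≤ C ∧ ∀ r, 0 < r → ∀ U : Finset α, (∀ u ∈ U, r ≤ ρ u) →
      ∑ u ∈ U, ρ u ^ ζ ≤ C * r ^ (ζ + d) := by
  have ratio_lt : (2 : ℝ) ^ (ζ + d) < 1 := rpow_lt_one_of_one_lt_of_neg one_lt_two (by linarith)
  refine ⟨2 ^ |ζ| * A / (1 - 2 ^ (ζ + d)) * 2 ^ (ζ + d),
    mul_nonneg (div_nonneg (mul_nonneg (by positivity) hρ.const_nonneg) (by linarith))
      (by positivity), fun r hr U hU ↦ ?_⟩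
  rw [mul_assoc, ← mul_rpow zero_le_two hr.le]
  refine hρ.sum_rpow_le_of_shells zero_lt_two ratio_lt (by positivity) fun u hu ↦ ?_
  obtain ⟨k, hk, hk'⟩ := exists_nat_pow_near ((one_le_div hr).2 (hU u hu)) one_lt_two
  rw [le_div_iff₀ hr] at hk
  rw [div_lt_iff₀ hr, pow_succ] at hk'
  exact ⟨k, by linarith, by linarith⟩

lemma rpow_mul_rpow_le_rpow_add_rpow {x y p q : ℝ} (hx : 0 < x) (hy : 0 < y) (hp : p ≤ 0)
    (hq : q ≤ 0) : x ^ p * y ^ q ≤ x ^ (p + q) + y ^ (p + q) := by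
  have hx' : 0 ≤ x ^ (p + q) := by positivity
  have hy' : 0 ≤ y ^ (p + q) := by positivity
  rcases le_total x y with hxy | hyx
  · calc x ^ p * y ^ q ≤ x ^ p * x ^ q :=
          mul_le_mul_of_nonneg_left (rpow_le_rpow_of_nonpos hx hxy hq) (by positivity)
      _ ≤ x ^ (p + q) + y ^ (p + q) := by rw [← rpow_add hx]; linarith
  · calc x ^ p * y ^ q ≤ y ^ p * y ^ q :=
          mul_le_mul_of_nonneg_right (rpow_le_rpow_of_nonpos hy hyx hp) (by positivity)
      _ ≤ x ^ (p + q) + y ^ (p + q) := by rw [← rpow_add hy]; linarith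

lemma HasPolynomialGrowth.exists_sum_rpow_mul_rpow_sub_le {G : Type*} [AddCommGroup G]
    {ρ : G → ℝ} (hρ : HasPolynomialGrowth ρ A d) (hρ_pos : ∀ u, 0 < ρ u) {p q : ℝ}
    (hq : q ≤ 0) (hdq : -d < q) (hpq : p + q < -d) :
    ∃ C, 0 ≤ C ∧ ∀ r, 0 < r → ∀ z, ∀ U : Finset G, (∀ u ∈ U, r ≤ ρ u) →
      ∑ u ∈ U, ρ u ^ p * ρ (z - u) ^ q ≤ C * r ^ (p + q + d) := by
  have hp : p ≤ 0 := by linarith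
  obtain ⟨C₁, hC₁, near_le⟩ := hρ.exists_sum_rpow_le_of_le hdq
  obtain ⟨C₂, hC₂, far_le⟩ := hρ.exists_sum_rpow_le_of_ge hpq
  refine ⟨C₁ + 2 * C₂, by positivity, fun r hr z U hU ↦ ?_⟩
  have sum_reflect (V : Finset G) (s : ℝ) :
      ∑ u ∈ V, ρ (z - u) ^ s = ∑ v ∈ V.map (Equiv.subLeft z).toEmbedding, ρ v ^ s :=
    (sum_map V (Equiv.subLeft z).toEmbedding fun v ↦ ρ v ^ s).symm
  have close_to_z : ∑ u ∈ U with ρ (z - u) ≤ r, ρ u ^ p * ρ (z - u) ^ q ≤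
      C₁ * r ^ (p + q + d) := by
    calc ∑ u ∈ U with ρ (z - u) ≤ r, ρ u ^ p * ρ (z - u) ^ q
        ≤ ∑ u ∈ U with ρ (z - u) ≤ r, r ^ p * ρ (z - u) ^ q := by
          refine sum_le_sum fun u hu ↦ mul_le_mul_of_nonneg_right ?_ (rpow_nonneg (hρ_pos _).le _)
          exact rpow_le_rpow_of_nonpos hr (hU u (mem_filter.1 hu).1) hp
      _ ≤ r ^ p * (C₁ * r ^ (q + d)) := by
          rw [← mul_sum, sum_reflect]
          gcongr
          refine near_le r hr _ (forall_mem_map.2 fun u hu ↦ ⟨hρ_pos _, (mem_filter.1 hu).2⟩)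
      _ = C₁ * r ^ (p + q + d) := by rw [add_assoc, rpow_add hr p]; ring
  have far_from_z : ∑ u ∈ U with ¬ρ (z - u) ≤ r, ρ u ^ p * ρ (z - u) ^ q ≤
      2 * C₂ * r ^ (p + q + d) := by
    calc ∑ u ∈ U with ¬ρ (z - u) ≤ r, ρ u ^ p * ρ (z - u) ^ q
        ≤ ∑ u ∈ U with ¬ρ (z - u) ≤ r, ρ u ^ (p + q) +
            ∑ u ∈ U with ¬ρ (z - u) ≤ r, ρ (z - u) ^ (p + q) := by
          rw [← sum_add_distrib]
          exact sum_le_sum fun u _ ↦ rpow_mul_rpow_le_rpow_add_rpow (hρ_pos _) (hρ_pos _) hp hq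
      _ ≤ C₂ * r ^ (p + q + d) + C₂ * r ^ (p + q + d) := by
          rw [sum_reflect]
          refine add_le_add (far_le r hr _ fun u hu ↦ hU u (mem_filter.1 hu).1)
            (far_le r hr _ (forall_mem_map.2 fun u hu ↦ (not_le.1 (mem_filter.1 hu).2).le))
      _ = 2 * C₂ * r ^ (p + q + d) := by ring
  rw [← sum_filter_add_sum_filter_not U fun u ↦ ρ (z - u) ≤ r]
  linarith

end PolynomialGrowth

section SummationByParts

variable {G : Type*} [AddCommGroup G]

/-- The points at which the indicator functions of `B` and of its translate `B + e` differ: where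
the boundary terms of a summation by parts over `B` in direction `e` live. -/
def shiftBoundary [DecidableEq G] (B : Finset G) (e : G) : Finset G :=
  symmDiff B (B.map (addRightEmbedding e))

lemma mem_shiftBoundary [DecidableEq G] {B : Finset G} {e u : G} :
    u ∈ shiftBoundary B e ↔ u ∈ B ∧ u - e ∉ B ∨ u - e ∈ B ∧ u ∉ B := by
  have mem_translate : u ∈ B.map (addRightEmbedding e) ↔ u - e ∈ B := by
    simp [← eq_sub_iff_add_eq]
  rw [shiftBoundary, mem_symmDiff, mem_translate]

lemma abs_sum_fwdDiff_le [DecidableEq G] (B : Finset G) (e : G) (h : G → ℝ) {c : ℝ}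
    (hc : ∀ u ∈ shiftBoundary B e, |h u| ≤ c) :
    |∑ u ∈ B, Δ_[e] h u| ≤ #(shiftBoundary B e) * c := by
  set B' := B.map (addRightEmbedding e)
  calc |∑ u ∈ B, Δ_[e] h u|
      = |∑ u ∈ B' \ B, h u - ∑ u ∈ B \ B', h u| := by
        rw [sum_sdiff_sub_sum_sdiff, sum_map, ← sum_sub_distrib]
        rfl
    _ ≤ ∑ u ∈ B' \ B, |h u| + ∑ u ∈ B \ B', |h u| :=
        (abs_sub _ _).trans (add_le_add (abs_sum_le_sum_abs _ _) (abs_sum_le_sum_abs _ _))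
    _ = ∑ u ∈ shiftBoundary B e, |h u| := by
        rw [add_comm, ← sum_union disjoint_sdiff_sdiff]
        rfl
    _ ≤ #(shiftBoundary B e) * c := by
        rw [← nsmul_eq_mul]
        exact sum_le_card_nsmul _ _ _ hc

lemma sum_fwdDiff_mul_sub_sum_mul_fwdDiff {R : Type*} [CommRing R] (B : Finset G) (e z : G)
    (f g : G → R) :
    ∑ u ∈ B, Δ_[e] f u * g (z - u) - ∑ u ∈ B, f u * Δ_[e] g (z - u) =
      ∑ u ∈ B, Δ_[e] (fun v ↦ f v * g (z + e - v)) u := by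
  rw [← sum_sub_distrib]
  refine sum_congr rfl fun u _ ↦ ?_
  simp only [fwdDiff, add_sub_add_right_eq_sub, sub_add_eq_add_sub]
  ring

lemma abs_sum_iterate_fwdDiff_mul_sub_le [DecidableEq G] (B : Finset G) (e z : G) (k : ℕ)
    {f g : G → ℝ} {c : ℝ}
    (hc : ∀ i j, i + j + 1 = k → ∀ u ∈ shiftBoundary B e,
      |(Δ_[e])^[i] f u * (Δ_[e])^[j] g (z + e - u)| ≤ c) :
    |∑ u ∈ B, (Δ_[e])^[k] f u * g (z - u) - ∑ u ∈ B, f u * (Δ_[e])^[k] g (z - u)| ≤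
      k * (#(shiftBoundary B e) * c) := by
  induction k generalizing f with
  | zero => simp
  | succ k ih =>
    have move_k : |∑ u ∈ B, (Δ_[e])^[k] (Δ_[e] f) u * g (z - u) -
        ∑ u ∈ B, Δ_[e] f u * (Δ_[e])^[k] g (z - u)| ≤ k * (#(shiftBoundary B e) * c) :=
      ih fun i j hij ↦ hc (i + 1) j (by omega)
    have move_last : |∑ u ∈ B, Δ_[e] f u * (Δ_[e])^[k] g (z - u) -
        ∑ u ∈ B, f u * Δ_[e] ((Δ_[e])^[k] g) (z - u)| ≤ #(shiftBoundary B e) * c := by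
      rw [sum_fwdDiff_mul_sub_sum_mul_fwdDiff]
      exact abs_sum_fwdDiff_le B e _ (hc 0 k (by omega))
    rw [Function.iterate_succ_apply, Function.iterate_succ_apply']
    push_cast
    linarith [abs_sub_le (∑ u ∈ B, (Δ_[e])^[k] (Δ_[e] f) u * g (z - u))
      (∑ u ∈ B, Δ_[e] f u * (Δ_[e])^[k] g (z - u)) (∑ u ∈ B, f u * Δ_[e] ((Δ_[e])^[k] g) (z - u))]

end SummationByParts

section Convolution

variable {G R : Type*} [AddCommGroup G] [Ring R] [TopologicalSpace R]

/-- The convolution of two functions on a discrete commutative group; where the series diverges it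
has the junk value `0`. -/
def groupConv (f g : G → R) (z : G) : R := ∑' w, f (z - w) * g w

lemma summable_fwdDiff_mul [IsTopologicalAddGroup R] {f g : G → R}
    (hfg : ∀ z, Summable fun w ↦ f (z - w) * g w) (e z : G) :
    Summable fun w ↦ Δ_[e] f (z - w) * g w := by
  simpa only [fwdDiff, sub_mul, sub_add_eq_add_sub] using (hfg (z + e)).sub (hfg z)

lemma fwdDiff_groupConv [IsTopologicalAddGroup R] [T2Space R] {f g : G → R}
    (hfg : ∀ z, Summable fun w ↦ f (z - w) * g w) (e : G) :
    Δ_[e] (groupConv f g) = groupConv (Δ_[e] f) g := by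
  ext z
  simp only [fwdDiff, groupConv, ← (hfg (z + e)).tsum_sub (hfg z), sub_mul, sub_add_eq_add_sub]

lemma summable_iterate_fwdDiff_mul [IsTopologicalAddGroup R] {f g : G → R}
    (hfg : ∀ z, Summable fun w ↦ f (z - w) * g w) (e : G) (k : ℕ) :
    ∀ z, Summable fun w ↦ (Δ_[e])^[k] f (z - w) * g w := by
  induction k with
  | zero => exact hfg
  | succ k ih =>
    rw [Function.iterate_succ_apply']
    exact summable_fwdDiff_mul ih e

lemma iterate_fwdDiff_groupConv [IsTopologicalAddGroup R] [T2Space R] {f g : G → R}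
    (hfg : ∀ z, Summable fun w ↦ f (z - w) * g w) (e : G) (k : ℕ) :
    (Δ_[e])^[k] (groupConv f g) = groupConv ((Δ_[e])^[k] f) g := by
  induction k with
  | zero => rfl
  | succ k ih =>
    rw [Function.iterate_succ_apply', ih, Function.iterate_succ_apply',
      fwdDiff_groupConv (summable_iterate_fwdDiff_mul hfg e k)]

lemma groupConv_eq_tsum_sub (f g : G → R) (z : G) :
    groupConv f g z = ∑' u, f u * g (z - u) := by
  rw [groupConv, ← (Equiv.subLeft z).tsum_eq]
  simp

end Convolution

lemma abs_tsum_le_add_of_sum_abs_le {α : Type*} {f : α → ℝ} (hf : Summable f) (B : Finset α)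
    {b c : ℝ} (hb : |∑ u ∈ B, f u| ≤ b) (hc : ∀ U : Finset α, Disjoint U B → ∑ u ∈ U, |f u| ≤ c) :
    |∑' u, f u| ≤ b + c := by
  classical
  refine le_of_tendsto hf.hasSum.abs ?_
  filter_upwards [Filter.eventually_ge_atTop B] with U hBU
  rw [← sum_sdiff hBU, add_comm b]
  exact (abs_add_le _ _).trans (add_le_add
    ((abs_sum_le_sum_abs _ _).trans (hc _ sdiff_disjoint)) hb)

section ParabolicLattice

/-- The discrete parabolic norm `‖·‖_{s,ε}` at scale `ε = 1`, on the rescaled lattice. -/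
def latticeNorm (u : ℤ × ℤ) : ℝ := max (max √|(u.1 : ℝ)| |(u.2 : ℝ)|) 1

lemma one_le_latticeNorm (u : ℤ × ℤ) : 1 ≤ latticeNorm u := le_max_right _ _

lemma latticeNorm_pos (u : ℤ × ℤ) : 0 < latticeNorm u := one_pos.trans_le (one_le_latticeNorm u)

lemma latticeNorm_time : latticeNorm (1, 0) = 1 := by simp [latticeNorm]

lemma latticeNorm_space : latticeNorm (0, 1) = 1 := by simp [latticeNorm]

lemma latticeNorm_neg (u : ℤ × ℤ) : latticeNorm (-u) = latticeNorm u := by simp [latticeNorm]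

lemma sqrt_abs_add_le (a b : ℝ) : √|a + b| ≤ √|a| + √|b| := by
  refine sqrt_le_iff.2 ⟨by positivity, (abs_add_le a b).trans ?_⟩
  rw [add_sq, sq_sqrt (abs_nonneg a), sq_sqrt (abs_nonneg b)]
  have : 0 ≤ 2 * √|a| * √|b| := by positivity
  linarith

lemma latticeNorm_add_le (u v : ℤ × ℤ) :
    latticeNorm (u + v) ≤ latticeNorm u + latticeNorm v := by
  have time_le (w : ℤ × ℤ) : √|(w.1 : ℝ)| ≤ latticeNorm w :=
    (le_max_left _ _).trans (le_max_left _ _)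
  have space_le (w : ℤ × ℤ) : |(w.2 : ℝ)| ≤ latticeNorm w :=
    (le_max_right _ _).trans (le_max_left _ _)
  refine max_le (max_le ?_ ?_) ?_
  · push_cast [Prod.fst_add]
    exact (sqrt_abs_add_le _ _).trans (add_le_add (time_le u) (time_le v))
  · push_cast [Prod.snd_add]
    exact (abs_add_le _ _).trans (add_le_add (space_le u) (space_le v))
  · linarith [one_le_latticeNorm u, one_le_latticeNorm v]

lemma latticeNorm_le_add_sub (z u : ℤ × ℤ) :
    latticeNorm z ≤ latticeNorm u + latticeNorm (z - u) := by
  simpa using latticeNorm_add_le u (z - u)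

lemma latticeNorm_le_iff {u : ℤ × ℤ} {r : ℝ} :
    latticeNorm u ≤ r ↔ 1 ≤ r ∧ |u.1| ≤ ⌊r ^ 2⌋ ∧ |u.2| ≤ ⌊r⌋ := by
  simp only [latticeNorm, max_le_iff, Int.le_floor, Int.cast_abs]
  constructor
  · rintro ⟨⟨ht, hx⟩, hr⟩
    exact ⟨hr, (sqrt_le_left (by linarith)).1 ht, hx⟩
  · rintro ⟨hr, ht, hx⟩
    exact ⟨⟨(sqrt_le_left (by linarith)).2 ht, hx⟩, hr⟩

/-- The closed ball of radius `r` around the origin; it is empty for `r < 1`, since `latticeNorm`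
is at least `1`. -/
def latticeBall (r : ℝ) : Finset (ℤ × ℤ) :=
  if 1 ≤ r then Icc (-⌊r ^ 2⌋) ⌊r ^ 2⌋ ×ˢ Icc (-⌊r⌋) ⌊r⌋ else ∅

lemma mem_latticeBall {u : ℤ × ℤ} {r : ℝ} : u ∈ latticeBall r ↔ latticeNorm u ≤ r := by
  rw [latticeBall, latticeNorm_le_iff]
  split_ifs with hr <;> simp [hr, abs_le]

lemma card_Icc_neg_floor_le {r : ℝ} (hr : 1 ≤ r) : (#(Icc (-⌊r⌋) ⌊r⌋) : ℝ) ≤ 3 * r := by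
  have hfloor : 0 ≤ ⌊r⌋ := Int.floor_nonneg.2 (by linarith)
  have hcard : (#(Icc (-⌊r⌋) ⌊r⌋) : ℤ) = 2 * ⌊r⌋ + 1 := by
    rw [Int.card_Icc, Int.toNat_of_nonneg (by omega)]
    ring
  have hcard' : (#(Icc (-⌊r⌋) ⌊r⌋) : ℝ) = 2 * ⌊r⌋ + 1 := by exact_mod_cast hcard
  linarith [Int.floor_le r]

lemma card_latticeBall_le {r : ℝ} (hr : 0 ≤ r) : (#(latticeBall r) : ℝ) ≤ 9 * r ^ 3 := by
  rw [latticeBall]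
  split_ifs with hr1
  · rw [card_product, Nat.cast_mul]
    calc (#(Icc (-⌊r ^ 2⌋) ⌊r ^ 2⌋) : ℝ) * #(Icc (-⌊r⌋) ⌊r⌋) ≤ (3 * r ^ 2) * (3 * r) := by
          gcongr
          · exact card_Icc_neg_floor_le (one_le_pow₀ hr1)
          · exact card_Icc_neg_floor_le hr1
      _ = 9 * r ^ 3 := by ring
  · rw [card_empty, Nat.cast_zero]
    positivity

lemma hasPolynomialGrowth_latticeNorm : HasPolynomialGrowth latticeNorm 9 3 := by
  intro r hr U hU
  calc (#U : ℝ) ≤ #(latticeBall r) := by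
        exact_mod_cast card_le_card fun u hu ↦ mem_latticeBall.2 (hU u hu)
    _ ≤ 9 * r ^ (3 : ℝ) := by
        rw [rpow_ofNat]
        exact card_latticeBall_le hr.le

lemma card_shiftBoundary_latticeBall_time_le {r : ℝ} (hr : 0 ≤ r) :
    (#(shiftBoundary (latticeBall r) (1, 0)) : ℝ) ≤ 6 * r := by
  rw [latticeBall]
  split_ifs with hr1
  · have hsub : shiftBoundary (Icc (-⌊r ^ 2⌋) ⌊r ^ 2⌋ ×ˢ Icc (-⌊r⌋) ⌊r⌋) (1, 0) ⊆
        {-⌊r ^ 2⌋, ⌊r ^ 2⌋ + 1} ×ˢ Icc (-⌊r⌋) ⌊r⌋ := by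
      intro u hu
      simp only [mem_shiftBoundary, mem_product, mem_Icc, Prod.fst_sub, Prod.snd_sub] at hu
      simp only [mem_product, mem_insert, mem_singleton, mem_Icc]
      omega
    calc (#(shiftBoundary (Icc (-⌊r ^ 2⌋) ⌊r ^ 2⌋ ×ˢ Icc (-⌊r⌋) ⌊r⌋) (1, 0)) : ℝ)
        ≤ #({-⌊r ^ 2⌋, ⌊r ^ 2⌋ + 1} : Finset ℤ) * #(Icc (-⌊r⌋) ⌊r⌋) := by
          exact_mod_cast (card_le_card hsub).trans_eq (card_product _ _)
      _ ≤ 2 * (3 * r) := by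
          gcongr
          · exact_mod_cast card_le_two
          · exact card_Icc_neg_floor_le hr1
      _ = 6 * r := by ring
  · simpa [shiftBoundary] using hr

lemma card_shiftBoundary_latticeBall_space_le (r : ℝ) :
    (#(shiftBoundary (latticeBall r) (0, 1)) : ℝ) ≤ 6 * r ^ 2 := by
  rw [latticeBall]
  split_ifs with hr1
  · have hsub : shiftBoundary (Icc (-⌊r ^ 2⌋) ⌊r ^ 2⌋ ×ˢ Icc (-⌊r⌋) ⌊r⌋) (0, 1) ⊆
        Icc (-⌊r ^ 2⌋) ⌊r ^ 2⌋ ×ˢ {-⌊r⌋, ⌊r⌋ + 1} := by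
      intro u hu
      simp only [mem_shiftBoundary, mem_product, mem_Icc, Prod.fst_sub, Prod.snd_sub] at hu
      simp only [mem_product, mem_insert, mem_singleton, mem_Icc]
      omega
    calc (#(shiftBoundary (Icc (-⌊r ^ 2⌋) ⌊r ^ 2⌋ ×ˢ Icc (-⌊r⌋) ⌊r⌋) (0, 1)) : ℝ)
        ≤ #(Icc (-⌊r ^ 2⌋) ⌊r ^ 2⌋) * #({-⌊r⌋, ⌊r⌋ + 1} : Finset ℤ) := by
          exact_mod_cast (card_le_card hsub).trans_eq (card_product _ _)
      _ ≤ (3 * r ^ 2) * 2 := by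
          gcongr
          · exact card_Icc_neg_floor_le (one_le_pow₀ hr1)
          · exact_mod_cast card_le_two
      _ = 6 * r ^ 2 := by ring
  · rw [shiftBoundary, map_empty, symmDiff_self, bot_eq_empty, card_empty, Nat.cast_zero]
    positivity

lemma div_four_le_latticeNorm_of_mem_shiftBoundary {e u z : ℤ × ℤ} (he : latticeNorm e = 1)
    (hu : u ∈ shiftBoundary (latticeBall (latticeNorm z / 2)) e) :
    latticeNorm z / 4 ≤ latticeNorm u ∧ latticeNorm z / 4 ≤ latticeNorm (z + e - u) := by
  have hz := latticeNorm_le_add_sub z (u - e)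
  rw [sub_sub_eq_add_sub] at hz
  have hue : latticeNorm (u - e) ≤ latticeNorm u + 1 := by
    rw [sub_eq_add_neg, ← he, ← latticeNorm_neg e]
    exact latticeNorm_add_le u (-e)
  have := one_le_latticeNorm u
  have := one_le_latticeNorm (z + e - u)
  simp only [mem_shiftBoundary, mem_latticeBall, not_le] at hu
  rcases hu with ⟨h_in, h_out⟩ | ⟨h_in, h_out⟩ <;> constructor <;> linarith

end ParabolicLattice

section LatticeKernels

/-- The iterated forward difference `D̄^k` of the lattice at scale `ε = 1`, for the multi-index
`k = (k₀, k₁)`. -/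
def latticeDiff (k₀ k₁ : ℕ) (F : ℤ × ℤ → ℝ) : ℤ × ℤ → ℝ :=
  (Δ_[(1, 0)])^[k₀] ((Δ_[(0, 1)])^[k₁] F)

lemma latticeDiff_eq_space_time (k₀ k₁ : ℕ) (F : ℤ × ℤ → ℝ) :
    latticeDiff k₀ k₁ F = (Δ_[(0, 1)])^[k₁] ((Δ_[(1, 0)])^[k₀] F) := by
  have hcomm : Function.Commute (Δ_[((1, 0) : ℤ × ℤ)] : (ℤ × ℤ → ℝ) → ℤ × ℤ → ℝ) Δ_[(0, 1)] := by
    intro f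
    ext u
    simp only [fwdDiff, add_right_comm]
    ring
  exact hcomm.iterate_iterate k₀ k₁ F

/-- The bounds defining `⦀F⦀_{ζ; m} ≤ M` on the lattice at scale `ε = 1`. -/
def LatticeSingBound (ζ : ℝ) (m : ℕ) (M : ℝ) (F : ℤ × ℤ → ℝ) : Prop :=
  ∀ k₀ k₁ : ℕ, 2 * k₀ + k₁ ≤ m → ∀ u,
    |latticeDiff k₀ k₁ F u| ≤ M * latticeNorm u ^ (ζ - (2 * (k₀ : ℝ) + (k₁ : ℝ)))

variable {ζ M : ℝ} {m : ℕ} {F : ℤ × ℤ → ℝ}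

lemma LatticeSingBound.const_nonneg (hF : LatticeSingBound ζ m M F) : 0 ≤ M :=
  nonneg_of_mul_nonneg_left ((abs_nonneg _).trans (hF 0 0 (Nat.zero_le m) 0))
    (rpow_pos_of_pos (latticeNorm_pos 0) _)

lemma LatticeSingBound.abs_le (hF : LatticeSingBound ζ m M F) (u : ℤ × ℤ) :
    |F u| ≤ M * latticeNorm u ^ ζ := by
  simpa [latticeDiff] using hF 0 0 (Nat.zero_le m) u

lemma LatticeSingBound.abs_latticeDiff_le_of_le (hF : LatticeSingBound ζ m M F) (hζ : ζ ≤ 0)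
    {k₀ k₁ : ℕ} (hk : 2 * k₀ + k₁ ≤ m) {q : ℝ} (hq : 0 < q) {u : ℤ × ℤ} (hu : q ≤ latticeNorm u) :
    |latticeDiff k₀ k₁ F u| ≤ M * q ^ (ζ - (2 * (k₀ : ℝ) + (k₁ : ℝ))) := by
  refine (hF k₀ k₁ hk u).trans (mul_le_mul_of_nonneg_left ?_ hF.const_nonneg)
  have : (0 : ℝ) ≤ 2 * k₀ + k₁ := by positivity
  exact rpow_le_rpow_of_nonpos hq hu (by linarith)

lemma LatticeSingBound.abs_latticeDiff_le_mul (hF : LatticeSingBound ζ m M F)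
    {k₀ k₁ : ℕ} (hk : 2 * k₀ + k₁ ≤ m) {q : ℝ} (hq : 0 < q) {u : ℤ × ℤ} (hu : q ≤ latticeNorm u) :
    |latticeDiff k₀ k₁ F u| ≤
      M * (q ^ (-(2 * (k₀ : ℝ) + (k₁ : ℝ))) * latticeNorm u ^ ζ) := by
  refine (hF k₀ k₁ hk u).trans (mul_le_mul_of_nonneg_left ?_ hF.const_nonneg)
  have hu0 := latticeNorm_pos u
  have : (0 : ℝ) ≤ 2 * k₀ + k₁ := by positivity
  rw [sub_eq_neg_add, rpow_add hu0]
  exact mul_le_mul_of_nonneg_right (rpow_le_rpow_of_nonpos hq hu (by linarith)) (by positivity)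

variable {ζ₁ ζ₂ M₁ M₂ : ℝ} {G : ℤ × ℤ → ℝ}

lemma LatticeSingBound.abs_latticeDiff_mul_latticeDiff_le (hF : LatticeSingBound ζ₁ m M₁ F)
    (hG : LatticeSingBound ζ₂ m M₂ G) (h₁ : ζ₁ ≤ 0) (h₂ : ζ₂ ≤ 0) {i₀ i₁ j₀ j₁ : ℕ}
    (hi : 2 * i₀ + i₁ ≤ m) (hj : 2 * j₀ + j₁ ≤ m) {q : ℝ} (hq : 0 < q) {u v : ℤ × ℤ}
    (hu : q ≤ latticeNorm u) (hv : q ≤ latticeNorm v) :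
    |latticeDiff i₀ i₁ F u * latticeDiff j₀ j₁ G v| ≤
      M₁ * M₂ * q ^ (ζ₁ + ζ₂ - (2 * (i₀ + j₀ : ℝ) + (i₁ + j₁ : ℝ))) := by
  have hM₁ := hF.const_nonneg
  calc |latticeDiff i₀ i₁ F u * latticeDiff j₀ j₁ G v|
      ≤ (M₁ * q ^ (ζ₁ - (2 * (i₀ : ℝ) + i₁))) * (M₂ * q ^ (ζ₂ - (2 * (j₀ : ℝ) + j₁))) := by
        rw [abs_mul]
        gcongr
        · exact hF.abs_latticeDiff_le_of_le h₁ hi hq hu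
        · exact hG.abs_latticeDiff_le_of_le h₂ hj hq hv
    _ = M₁ * M₂ * (q ^ (ζ₁ - (2 * (i₀ : ℝ) + i₁)) * q ^ (ζ₂ - (2 * (j₀ : ℝ) + j₁))) := by ring
    _ = M₁ * M₂ * q ^ (ζ₁ + ζ₂ - (2 * (i₀ + j₀ : ℝ) + (i₁ + j₁ : ℝ))) := by
        rw [← rpow_add hq]
        ring_nf

lemma LatticeSingBound.abs_sum_move_time_le (hF : LatticeSingBound ζ₁ m M₁ F)
    (hG : LatticeSingBound ζ₂ m M₂ G) (h₁ : ζ₁ ≤ 0) (h₂ : ζ₂ ≤ 0) {k₀ k₁ : ℕ}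
    (hk : 2 * k₀ + k₁ ≤ m) (z : ℤ × ℤ) :
    |∑ u ∈ latticeBall (latticeNorm z / 2), latticeDiff k₀ k₁ F u * G (z - u) -
        ∑ u ∈ latticeBall (latticeNorm z / 2), latticeDiff 0 k₁ F u * latticeDiff k₀ 0 G (z - u)| ≤
      12 * k₀ * (M₁ * M₂ * (latticeNorm z / 4) ^ (ζ₁ + ζ₂ + 3 - (2 * (k₀ : ℝ) + k₁))) := by
  have hz := latticeNorm_pos z
  have hM₁ := hF.const_nonneg
  have hM₂ := hG.const_nonneg
  have boundary_le (i j : ℕ) (hij : i + j + 1 = k₀) (u : ℤ × ℤ)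
      (hu : u ∈ shiftBoundary (latticeBall (latticeNorm z / 2)) (1, 0)) :
      |latticeDiff i k₁ F u * latticeDiff j 0 G (z + (1, 0) - u)| ≤
        M₁ * M₂ * (latticeNorm z / 4) ^ (ζ₁ + ζ₂ + 2 - (2 * (k₀ : ℝ) + k₁)) := by
    obtain ⟨hu₀, huz⟩ := div_four_le_latticeNorm_of_mem_shiftBoundary latticeNorm_time hu
    refine (hF.abs_latticeDiff_mul_latticeDiff_le hG h₁ h₂ (by omega) (by omega) (by positivity)
      hu₀ huz).trans_eq ?_
    rw [← hij]
    push_cast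
    ring_nf
  refine (abs_sum_iterate_fwdDiff_mul_sub_le _ _ z k₀ boundary_le).trans ?_
  calc _ ≤ k₀ * ((6 * (latticeNorm z / 2)) *
        (M₁ * M₂ * (latticeNorm z / 4) ^ (ζ₁ + ζ₂ + 2 - (2 * (k₀ : ℝ) + k₁)))) := by
        gcongr
        exact card_shiftBoundary_latticeBall_time_le (by positivity)
    _ = 12 * k₀ * (M₁ * M₂ * ((latticeNorm z / 4) ^ (ζ₁ + ζ₂ + 2 - (2 * (k₀ : ℝ) + k₁)) *
          (latticeNorm z / 4))) := by ring
    _ = _ := by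
        rw [← rpow_add_one (by positivity)]
        ring_nf

lemma LatticeSingBound.abs_sum_move_space_le (hF : LatticeSingBound ζ₁ m M₁ F)
    (hG : LatticeSingBound ζ₂ m M₂ G) (h₁ : ζ₁ ≤ 0) (h₂ : ζ₂ ≤ 0) {k₀ k₁ : ℕ}
    (hk : 2 * k₀ + k₁ ≤ m) (z : ℤ × ℤ) :
    |∑ u ∈ latticeBall (latticeNorm z / 2), latticeDiff 0 k₁ F u * latticeDiff k₀ 0 G (z - u) -
        ∑ u ∈ latticeBall (latticeNorm z / 2), F u * latticeDiff k₀ k₁ G (z - u)| ≤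
      24 * k₁ * (M₁ * M₂ * (latticeNorm z / 4) ^ (ζ₁ + ζ₂ + 3 - (2 * (k₀ : ℝ) + k₁))) := by
  have hz := latticeNorm_pos z
  have hM₁ := hF.const_nonneg
  have hM₂ := hG.const_nonneg
  have boundary_le (i j : ℕ) (hij : i + j + 1 = k₁) (u : ℤ × ℤ)
      (hu : u ∈ shiftBoundary (latticeBall (latticeNorm z / 2)) (0, 1)) :
      |(Δ_[(0, 1)])^[i] F u * (Δ_[(0, 1)])^[j] (latticeDiff k₀ 0 G) (z + (0, 1) - u)| ≤
        M₁ * M₂ * (latticeNorm z / 4) ^ (ζ₁ + ζ₂ + 1 - (2 * (k₀ : ℝ) + k₁)) := by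
    obtain ⟨hu₀, huz⟩ := div_four_le_latticeNorm_of_mem_shiftBoundary latticeNorm_space hu
    have hprod := hF.abs_latticeDiff_mul_latticeDiff_le hG h₁ h₂ (i₀ := 0) (i₁ := i) (j₀ := k₀)
      (j₁ := j) (by omega) (by omega) (by positivity) hu₀ huz
    rw [latticeDiff_eq_space_time k₀ j] at hprod
    refine hprod.trans_eq ?_
    rw [← hij]
    push_cast
    ring_nf
  rw [latticeDiff_eq_space_time k₀ k₁]
  refine (abs_sum_iterate_fwdDiff_mul_sub_le _ _ z k₁ boundary_le).trans ?_
  calc _ ≤ k₁ * ((6 * (latticeNorm z / 2) ^ 2) *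
        (M₁ * M₂ * (latticeNorm z / 4) ^ (ζ₁ + ζ₂ + 1 - (2 * (k₀ : ℝ) + k₁)))) := by
        gcongr
        exact card_shiftBoundary_latticeBall_space_le _
    _ = 24 * k₁ * (M₁ * M₂ * ((latticeNorm z / 4) ^ (ζ₁ + ζ₂ + 1 - (2 * (k₀ : ℝ) + k₁)) *
          (latticeNorm z / 4) ^ 2)) := by ring
    _ = _ := by
        rw [← rpow_add_natCast (by positivity)]
        push_cast
        ring_nf

lemma exists_abs_sum_latticeBall_mul_latticeDiff_le (hζ₁ : -3 < ζ₁) (hbar : ζ₁ + ζ₂ + 3 ≤ 0) :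
    ∃ C, 0 ≤ C ∧ ∀ m F G M₁ M₂, LatticeSingBound ζ₁ m M₁ F → LatticeSingBound ζ₂ m M₂ G →
      ∀ k₀ k₁, 2 * k₀ + k₁ ≤ m → ∀ z,
        |∑ u ∈ latticeBall (latticeNorm z / 2), F u * latticeDiff k₀ k₁ G (z - u)| ≤
          C * (M₁ * M₂ * (latticeNorm z / 4) ^ (ζ₁ + ζ₂ + 3 - (2 * (k₀ : ℝ) + k₁))) := by
  have h₂ : ζ₂ ≤ 0 := by linarith
  obtain ⟨C, hC, sum_rpow_le⟩ := hasPolynomialGrowth_latticeNorm.exists_sum_rpow_le_of_le hζ₁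
  refine ⟨C, hC, fun m F G M₁ M₂ hF hG k₀ k₁ hk z ↦ ?_⟩
  have hM₁ := hF.const_nonneg
  have hM₂ := hG.const_nonneg
  have hz := latticeNorm_pos z
  have : (0 : ℝ) ≤ 2 * k₀ + k₁ := by positivity
  set r := latticeNorm z / 2 with hr
  have hr0 : 0 < r := by positivity
  have summand_le (u : ℤ × ℤ) (hu : latticeNorm u ≤ r) :
      |F u * latticeDiff k₀ k₁ G (z - u)| ≤
        M₁ * latticeNorm u ^ ζ₁ * (M₂ * r ^ (ζ₂ - (2 * (k₀ : ℝ) + k₁))) := by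
    rw [abs_mul]
    exact mul_le_mul (hF.abs_le u)
      (hG.abs_latticeDiff_le_of_le h₂ hk hr0 (by linarith [latticeNorm_le_add_sub z u]))
      (abs_nonneg _) ((abs_nonneg _).trans (hF.abs_le u))
  calc |∑ u ∈ latticeBall r, F u * latticeDiff k₀ k₁ G (z - u)|
      ≤ ∑ u ∈ latticeBall r, M₁ * latticeNorm u ^ ζ₁ * (M₂ * r ^ (ζ₂ - (2 * (k₀ : ℝ) + k₁))) :=
        (abs_sum_le_sum_abs _ _).trans
          (sum_le_sum fun u hu ↦ summand_le u (mem_latticeBall.1 hu))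
    _ ≤ M₁ * (C * r ^ (ζ₁ + 3)) * (M₂ * r ^ (ζ₂ - (2 * (k₀ : ℝ) + k₁))) := by
        rw [← sum_mul, ← mul_sum]
        gcongr
        exact sum_rpow_le _ hr0 _ fun u hu ↦ ⟨latticeNorm_pos u, mem_latticeBall.1 hu⟩
    _ = C * (M₁ * M₂ * (r ^ (ζ₁ + 3) * r ^ (ζ₂ - (2 * (k₀ : ℝ) + k₁)))) := by ring
    _ = C * (M₁ * M₂ * r ^ (ζ₁ + ζ₂ + 3 - (2 * (k₀ : ℝ) + k₁))) := by
        rw [← rpow_add hr0]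
        ring_nf
    _ ≤ _ := by
        gcongr C * (M₁ * M₂ * ?_)
        exact rpow_le_rpow_of_nonpos (by positivity) (by linarith) (by linarith)

lemma exists_abs_sum_latticeBall_latticeDiff_mul_le (m : ℕ) (hζ₁ : -3 < ζ₁) (h₁ : ζ₁ ≤ 0)
    (hbar : ζ₁ + ζ₂ + 3 ≤ 0) :
    ∃ C, 0 ≤ C ∧ ∀ F G M₁ M₂, LatticeSingBound ζ₁ m M₁ F → LatticeSingBound ζ₂ m M₂ G →
      ∀ k₀ k₁, 2 * k₀ + k₁ ≤ m → ∀ z,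
        |∑ u ∈ latticeBall (latticeNorm z / 2), latticeDiff k₀ k₁ F u * G (z - u)| ≤
          C * (M₁ * M₂ * (latticeNorm z / 4) ^ (ζ₁ + ζ₂ + 3 - (2 * (k₀ : ℝ) + k₁))) := by
  have h₂ : ζ₂ ≤ 0 := by linarith
  obtain ⟨C, hC, moved_le⟩ := exists_abs_sum_latticeBall_mul_latticeDiff_le hζ₁ hbar
  refine ⟨C + 24 * m, by positivity, fun F G M₁ M₂ hF hG k₀ k₁ hk z ↦ ?_⟩
  specialize moved_le m F G M₁ M₂ hF hG k₀ k₁ hk z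
  have time_le := hF.abs_sum_move_time_le hG h₁ h₂ hk z
  have space_le := hF.abs_sum_move_space_le hG h₁ h₂ hk z
  set E := M₁ * M₂ * (latticeNorm z / 4) ^ (ζ₁ + ζ₂ + 3 - (2 * (k₀ : ℝ) + k₁))
  have hE : 0 ≤ E := mul_nonneg (mul_nonneg hF.const_nonneg hG.const_nonneg)
    (rpow_nonneg (div_nonneg (latticeNorm_pos z).le zero_le_four) _)
  have errors_le : 12 * k₀ * E + 24 * k₁ * E ≤ 24 * m * E := by
    have hk' : (2 * k₀ + k₁ : ℝ) ≤ m := by exact_mod_cast hk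
    rw [← add_mul]
    gcongr
    linarith [k₀.cast_nonneg (α := ℝ)]
  rw [add_mul]
  rw [abs_le] at time_le space_le moved_le ⊢
  constructor <;> linarith

lemma exists_sum_abs_latticeDiff_mul_le (h₂ : ζ₂ ≤ 0) (hζ₂ : -3 < ζ₂)
    (hbar : ζ₁ + ζ₂ + 3 < 0) :
    ∃ C, 0 ≤ C ∧ ∀ m F G M₁ M₂, LatticeSingBound ζ₁ m M₁ F → LatticeSingBound ζ₂ m M₂ G →
      ∀ k₀ k₁, 2 * k₀ + k₁ ≤ m → ∀ r, 0 < r → ∀ z, ∀ U : Finset (ℤ × ℤ),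
        (∀ u ∈ U, r ≤ latticeNorm u) → ∑ u ∈ U, |latticeDiff k₀ k₁ F u * G (z - u)| ≤
          C * (M₁ * M₂ * r ^ (ζ₁ + ζ₂ + 3 - (2 * (k₀ : ℝ) + k₁))) := by
  obtain ⟨C, hC, sum_rpow_mul_rpow_le⟩ :=
    hasPolynomialGrowth_latticeNorm.exists_sum_rpow_mul_rpow_sub_le latticeNorm_pos h₂ hζ₂
      (by linarith : ζ₁ + ζ₂ < -3)
  refine ⟨C, hC, fun m F G M₁ M₂ hF hG k₀ k₁ hk r hr z U hU ↦ ?_⟩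
  have hM₁ := hF.const_nonneg
  have hM₂ := hG.const_nonneg
  have summand_le (u : ℤ × ℤ) (hu : r ≤ latticeNorm u) : |latticeDiff k₀ k₁ F u * G (z - u)| ≤
      M₁ * M₂ * r ^ (-(2 * (k₀ : ℝ) + k₁)) * (latticeNorm u ^ ζ₁ * latticeNorm (z - u) ^ ζ₂) := by
    rw [abs_mul]
    refine (mul_le_mul (hF.abs_latticeDiff_le_mul hk hr hu) (hG.abs_le (z - u)) (abs_nonneg _)
      ((abs_nonneg _).trans (hF.abs_latticeDiff_le_mul hk hr hu))).trans_eq ?_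
    ring
  calc ∑ u ∈ U, |latticeDiff k₀ k₁ F u * G (z - u)|
      ≤ M₁ * M₂ * r ^ (-(2 * (k₀ : ℝ) + k₁)) *
          ∑ u ∈ U, latticeNorm u ^ ζ₁ * latticeNorm (z - u) ^ ζ₂ := by
        rw [mul_sum]
        exact sum_le_sum fun u hu ↦ summand_le u (hU u hu)
    _ ≤ M₁ * M₂ * r ^ (-(2 * (k₀ : ℝ) + k₁)) * (C * r ^ (ζ₁ + ζ₂ + 3)) := by
        gcongr
        exact sum_rpow_mul_rpow_le r hr z U hU
    _ = C * (M₁ * M₂ * r ^ (ζ₁ + ζ₂ + 3 - (2 * (k₀ : ℝ) + k₁))) := by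
        rw [sub_eq_neg_add, rpow_add hr (-(2 * (k₀ : ℝ) + k₁))]
        ring

lemma LatticeSingBound.summable_latticeDiff_mul_sub (hF : LatticeSingBound ζ₁ m M₁ F)
    (hG : LatticeSingBound ζ₂ m M₂ G) (h₂ : ζ₂ ≤ 0) (hζ₂ : -3 < ζ₂)
    (hbar : ζ₁ + ζ₂ + 3 < 0) {k₀ k₁ : ℕ} (hk : 2 * k₀ + k₁ ≤ m) (z : ℤ × ℤ) :
    Summable fun u ↦ latticeDiff k₀ k₁ F u * G (z - u) := by
  obtain ⟨C, -, sum_le⟩ := exists_sum_abs_latticeDiff_mul_le h₂ hζ₂ hbar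
  exact .of_abs (summable_of_sum_le (fun _ ↦ abs_nonneg _) fun U ↦
    sum_le m F G M₁ M₂ hF hG k₀ k₁ hk 1 one_pos z U fun u _ ↦ one_le_latticeNorm u)

lemma LatticeSingBound.latticeDiff_groupConv (hF : LatticeSingBound ζ₁ m M₁ F)
    (hG : LatticeSingBound ζ₂ m M₂ G) (h₂ : ζ₂ ≤ 0) (hζ₂ : -3 < ζ₂)
    (hbar : ζ₁ + ζ₂ + 3 < 0) (k₀ k₁ : ℕ) :
    latticeDiff k₀ k₁ (groupConv F G) = groupConv (latticeDiff k₀ k₁ F) G := by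
  have hFG (z : ℤ × ℤ) : Summable fun w ↦ F (z - w) * G w := by
    have := hF.summable_latticeDiff_mul_sub hG h₂ hζ₂ hbar (k₀ := 0) (k₁ := 0) (Nat.zero_le m) z
    rw [← (Equiv.subLeft z).summable_iff] at this
    simpa [Function.comp_def, latticeDiff] using this
  rw [latticeDiff, iterate_fwdDiff_groupConv hFG,
    iterate_fwdDiff_groupConv (summable_iterate_fwdDiff_mul hFG _ k₁), latticeDiff]

lemma exists_latticeSingBound_groupConv (m : ℕ) (hζ₁ : -3 < ζ₁) (hζ₂ : -3 < ζ₂)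
    (hbar : ζ₁ + ζ₂ + 3 < 0) :
    ∃ C, 0 < C ∧ ∀ F G M₁ M₂, LatticeSingBound ζ₁ m M₁ F → LatticeSingBound ζ₂ m M₂ G →
      LatticeSingBound (ζ₁ + ζ₂ + 3) m (C * M₁ * M₂) (groupConv F G) := by
  have h₁ : ζ₁ ≤ 0 := by linarith
  have h₂ : ζ₂ ≤ 0 := by linarith
  obtain ⟨C₁, hC₁, near_le⟩ := exists_abs_sum_latticeBall_latticeDiff_mul_le m hζ₁ h₁ hbar.le
  obtain ⟨C₂, hC₂, far_le⟩ := exists_sum_abs_latticeDiff_mul_le h₂ hζ₂ hbar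
  refine ⟨(C₁ + C₂ + 1) * 4 ^ (m - (ζ₁ + ζ₂ + 3)), by positivity,
    fun F G M₁ M₂ hF hG k₀ k₁ hk z ↦ ?_⟩
  have hM₁ := hF.const_nonneg
  have hM₂ := hG.const_nonneg
  have hz := latticeNorm_pos z
  have : (2 * k₀ + k₁ : ℝ) ≤ m := by exact_mod_cast hk
  have : (0 : ℝ) ≤ 2 * k₀ + k₁ := by positivity
  set s := ζ₁ + ζ₂ + 3 - (2 * (k₀ : ℝ) + k₁)
  have off_ball_le (U : Finset (ℤ × ℤ)) (hU : Disjoint U (latticeBall (latticeNorm z / 2))) :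
      ∑ u ∈ U, |latticeDiff k₀ k₁ F u * G (z - u)| ≤
        C₂ * (M₁ * M₂ * (latticeNorm z / 2) ^ s) :=
    far_le m F G M₁ M₂ hF hG k₀ k₁ hk _ (by positivity) z U fun u hu ↦
      (not_le.1 (mt mem_latticeBall.2 (disjoint_left.1 hU hu))).le
  have half_le_quarter : (latticeNorm z / 2) ^ s ≤ (latticeNorm z / 4) ^ s :=
    rpow_le_rpow_of_nonpos (by positivity) (by linarith) (by linarith)
  have quarter_le : (latticeNorm z / 4) ^ s ≤ 4 ^ (m - (ζ₁ + ζ₂ + 3)) * latticeNorm z ^ s := by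
    rw [div_rpow hz.le zero_le_four, div_eq_inv_mul, ← rpow_neg zero_le_four]
    gcongr
    · norm_num
    · linarith
  rw [hF.latticeDiff_groupConv hG h₂ hζ₂ hbar, groupConv_eq_tsum_sub]
  calc |∑' u, latticeDiff k₀ k₁ F u * G (z - u)|
      ≤ C₁ * (M₁ * M₂ * (latticeNorm z / 4) ^ s) + C₂ * (M₁ * M₂ * (latticeNorm z / 2) ^ s) :=
        abs_tsum_le_add_of_sum_abs_le (hF.summable_latticeDiff_mul_sub hG h₂ hζ₂ hbar hk z) _
          (near_le F G M₁ M₂ hF hG k₀ k₁ hk z) off_ball_le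
    _ ≤ (C₁ + C₂) * (M₁ * M₂ * (latticeNorm z / 4) ^ s) := by
        rw [add_mul]
        gcongr
    _ ≤ (C₁ + C₂ + 1) * (M₁ * M₂ * (4 ^ (m - (ζ₁ + ζ₂ + 3)) * latticeNorm z ^ s)) := by
        gcongr ?_ * (M₁ * M₂ * ?_)
        linarith
    _ = (C₁ + C₂ + 1) * 4 ^ (m - (ζ₁ + ζ₂ + 3)) * M₁ * M₂ * latticeNorm z ^ s := by ring

end LatticeKernels

section Rescaling

open Function

variable {ε : ℝ}

lemma snormE_eq_mul_latticeNorm (hε : 0 < ε) (t x : ℤ) :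
    snormE ε t x = ε * latticeNorm (t, x) := by
  simp [snormE, snorm, latticeNorm, mul_max_of_nonneg _ _ hε.le, abs_mul, abs_of_pos hε, hε.le]

lemma uncurry_fdT (f : ℤ → ℤ → ℝ) :
    uncurry (fdT ε f) = (ε ^ 2)⁻¹ • Δ_[(1, 0)] (uncurry f) := by
  ext ⟨t, x⟩
  simp [fdT, fwdDiff, div_eq_inv_mul]

lemma uncurry_fdX (f : ℤ → ℤ → ℝ) : uncurry (fdX ε f) = ε⁻¹ • Δ_[(0, 1)] (uncurry f) := by
  ext ⟨t, x⟩
  simp [fdX, fwdDiff, div_eq_inv_mul]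

lemma uncurry_iterate_fdT (k : ℕ) (f : ℤ → ℤ → ℝ) :
    uncurry ((fdT ε)^[k] f) = ((ε ^ 2)⁻¹) ^ k • (Δ_[(1, 0)])^[k] (uncurry f) := by
  induction k with
  | zero => simp
  | succ k ih =>
    rw [iterate_succ_apply', uncurry_fdT, ih, fwdDiff_const_smul, iterate_succ_apply', smul_smul,
      ← pow_succ']

lemma uncurry_iterate_fdX (k : ℕ) (f : ℤ → ℤ → ℝ) :
    uncurry ((fdX ε)^[k] f) = (ε⁻¹) ^ k • (Δ_[(0, 1)])^[k] (uncurry f) := by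
  induction k with
  | zero => simp
  | succ k ih =>
    rw [iterate_succ_apply', uncurry_fdX, ih, fwdDiff_const_smul, iterate_succ_apply', smul_smul,
      ← pow_succ']

lemma fdiff_eq_latticeDiff_div (k₀ k₁ : ℕ) (f : ℤ → ℤ → ℝ) (t x : ℤ) :
    fdiff ε k₀ k₁ f t x = latticeDiff k₀ k₁ (uncurry f) (t, x) / ε ^ (2 * k₀ + k₁) := by
  have hdiff : uncurry (fdiff ε k₀ k₁ f) =
      (((ε ^ 2)⁻¹) ^ k₀ * (ε⁻¹) ^ k₁) • latticeDiff k₀ k₁ (uncurry f) := by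
    rw [fdiff, uncurry_iterate_fdT, uncurry_iterate_fdX, fwdDiff_iter_const_smul, smul_smul,
      latticeDiff]
  rw [← uncurry_apply_pair (fdiff ε k₀ k₁ f), hdiff, Pi.smul_apply, smul_eq_mul, div_eq_inv_mul,
    inv_pow, inv_pow, ← mul_inv, ← pow_mul, ← pow_add]

lemma singBound_iff_latticeSingBound (hε : 0 < ε) {ζ M : ℝ} {m : ℕ} {K : ℤ → ℤ → ℝ} :
    SingBound ε ζ m M K ↔ LatticeSingBound ζ m (M * ε ^ ζ) (uncurry K) := by
  simp only [SingBound, LatticeSingBound, Prod.forall]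
  refine forall₅_congr fun k₀ k₁ _ t x ↦ ?_
  have hpow : ε ^ (ζ - (2 * (k₀ : ℝ) + k₁)) * ε ^ (2 * k₀ + k₁) = ε ^ ζ := by
    rw [← rpow_add_natCast hε.ne']
    push_cast
    ring_nf
  rw [fdiff_eq_latticeDiff_div, abs_div, abs_of_pos (pow_pos hε _), div_le_iff₀ (pow_pos hε _),
    snormE_eq_mul_latticeNorm hε, mul_rpow hε.le (latticeNorm_pos _).le, ← hpow]
  ring_nf

lemma uncurry_dconv (K₁ K₂ : ℤ → ℤ → ℝ) :
    uncurry (dconv ε K₁ K₂) = ε ^ 3 • groupConv (uncurry K₁) (uncurry K₂) := by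
  ext ⟨t, x⟩
  simp [dconv, groupConv, uncurry_def]

lemma LatticeSingBound.const_smul {ζ M : ℝ} {m : ℕ} {F : ℤ × ℤ → ℝ}
    (hF : LatticeSingBound ζ m M F) {c : ℝ} (hc : 0 ≤ c) :
    LatticeSingBound ζ m (c * M) (c • F) := by
  intro k₀ k₁ hk u
  rw [latticeDiff, fwdDiff_iter_const_smul, fwdDiff_iter_const_smul, Pi.smul_apply, smul_eq_mul,
    abs_mul, abs_of_nonneg hc, mul_assoc]
  exact mul_le_mul_of_nonneg_left (hF k₀ k₁ hk u) hc

theorem statement12_general {ζ₁ ζ₂ : ℝ} (h₁ : -3 < ζ₁) (h₂ : -3 < ζ₂) (hbar : ζ₁ + ζ₂ + 3 < 0)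
    (m : ℕ) :
    ∃ C : ℝ, 0 < C ∧ ∀ ε : ℝ, 0 < ε → ∀ (K₁ K₂ : ℤ → ℤ → ℝ) (M₁ M₂ : ℝ),
      SingBound ε ζ₁ m M₁ K₁ → SingBound ε ζ₂ m M₂ K₂ →
        SingBound ε (ζ₁ + ζ₂ + 3) m (C * M₁ * M₂) (dconv ε K₁ K₂) := by
  obtain ⟨C, hC, hconv⟩ := exists_latticeSingBound_groupConv m h₁ h₂ hbar
  refine ⟨C, hC, fun ε hε K₁ K₂ M₁ M₂ hK₁ hK₂ ↦ ?_⟩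
  rw [singBound_iff_latticeSingBound hε] at hK₁ hK₂ ⊢
  have hpow : ε ^ (ζ₁ + ζ₂ + 3) = ε ^ ζ₁ * ε ^ ζ₂ * ε ^ 3 := by
    rw [rpow_add hε, rpow_add hε, rpow_ofNat]
  rw [uncurry_dconv, hpow]
  convert (hconv _ _ _ _ hK₁ hK₂).const_smul (pow_nonneg hε.le 3) using 1
  ring

end Rescaling

/-- convolution of discrete singular kernels of orders
`ζ₁, ζ₂ > -3` with `ζ̄ = ζ₁ + ζ₂ + 3 < 0` is a discrete singular kernel of
order `ζ̄`, uniformly in `ε`. -/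
theorem statement12 (ζ₁ ζ₂ : ℝ) (h₁ : -3 < ζ₁) (h₂ : -3 < ζ₂)
    (hbar : ζ₁ + ζ₂ + 3 < 0) (m : ℕ) (R : ℝ) (hR : 0 < R) :
    ∃ C : ℝ, 0 < C ∧
      ∀ (N : ℕ) (ε : ℝ), ε = ((2 : ℝ) ^ N)⁻¹ → 4 * (m : ℝ) * ε < 1 →
      ∀ K₁ K₂ : ℤ → ℤ → ℝ, SuppIn ε R K₁ → SuppIn ε R K₂ →
      ∀ M₁ M₂ : ℝ, 0 ≤ M₁ → 0 ≤ M₂ →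
        SingBound ε ζ₁ m M₁ K₁ → SingBound ε ζ₂ m M₂ K₂ →
        SingBound ε (ζ₁ + ζ₂ + 3) m (C * M₁ * M₂) (dconv ε K₁ K₂) := by
  obtain ⟨C, hC, hconv⟩ := statement12_general h₁ h₂ hbar m
  exact ⟨C, hC, fun N ε hε _ K₁ K₂ _ _ M₁ M₂ _ _ ↦ hconv ε (hε ▸ by positivity) K₁ K₂ M₁ M₂⟩
end
end

section
/- Let a : ℤ → ℝ be finitely supported with a(−k) = a(k), Σ_k a(k) = 0, Σ_k k² a(k) = 2, and ν̂(θ) := Σ_k a(k) e^{−2πikθ} vanishing only for θ ∈ ℤ; set ν̄ := Σ_k |a(k)| and f(θ) := −ν̂(θ)/θ² for θ ≠ 0. Let b : ℤ → ℝ be finitely supported with Σ_k b(k) = 0 and Σ_k k b(k) = 1, set π̂(θ) := Σ_k b(k) e^{−2πikθ} and g(θ) := π̂(θ)/(iθ) for θ ≠ 0. Let c : ℤ×ℤ → ℝ be finitely supported with c(k,l) = c(l,k) and μ̂(k₁,k₂) := Σ_{y₁,y₂} c(y₁,y₂) e^{−2πi(k₁y₁+k₂y₂)}. Then for every ε = 2^{−N},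 the (absolutely convergent) sum C^{⟨2⟩,ε} := ε³ Σ_{n=0}^{∞} Σ_{x∈εℤ} B_ε( D_{x,ε} P^ε(nε², ·), D_{x,ε} P^ε(nε², ·) )(x) satisfies C^{⟨2⟩,ε} = ε^{−1} ∫_{−1/2}^{1/2} g(k) g(−k) · (4ν̄²) / ( f(k) (4ν̄ + ν̂(k)) ) · μ̂(−k, k) dk, and this integral is finite. -/
open Real

noncomputable section

/-- One step of the operator `Id + ε²Δ_ε` on grid functions (indexed form; the
powers of `ε` cancel). Here `Δ_ε φ(x) = (2ν̄ε²)⁻¹ Σ_k a(k) φ(x+εk)` with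
`ν̄ = Σ_k |a(k)|`. -/
def gridStep (a : ℤ →₀ ℝ) (f : ℤ → ℝ) : ℤ → ℝ :=
  fun j => f j + (2 * ∑ k ∈ a.support, |a k|)⁻¹ * ∑ k ∈ a.support, a k * f (j + k)

/-- `(Id + ε²Δ_ε)^n δ₀` on grid indices, so that the grid discrete heat kernel
is `P^ε(nε², εj) = ε⁻¹ · gridHeat a n j`. -/
def gridHeat (a : ℤ →₀ ℝ) (n : ℕ) : ℤ → ℝ :=
  (gridStep a)^[n] (fun j => if j = 0 then 1 else 0)

/-- The Fourier transform `ν̂(θ) = Σ_k a(k) e^{-2πikθ}`. -/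
def nuHat (a : ℤ →₀ ℝ) (θ : ℝ) : ℂ :=
  ∑ k ∈ a.support, (a k : ℂ) * Complex.exp (-(2 * Real.pi * k * θ) * Complex.I)

/-- The Fourier transform `π̂(θ) = Σ_k b(k) e^{-2πikθ}`. -/
def piHat (b : ℤ →₀ ℝ) (θ : ℝ) : ℂ :=
  ∑ k ∈ b.support, (b k : ℂ) * Complex.exp (-(2 * Real.pi * k * θ) * Complex.I)

/-- The Fourier transform `μ̂(k₁,k₂) = Σ_{y₁,y₂} c(y₁,y₂) e^{-2πi(k₁y₁+k₂y₂)}`. -/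
def muHat (c : (ℤ × ℤ) →₀ ℝ) (k₁ k₂ : ℝ) : ℂ :=
  ∑ p ∈ c.support,
    (c p : ℂ) * Complex.exp (-(2 * Real.pi * (k₁ * p.1 + k₂ * p.2)) * Complex.I)

/-- The grid function `D_{x,ε} P^ε(nε², ·)`, at the point `ε i`. -/
def DPgrid (a b : ℤ →₀ ℝ) (ε : ℝ) (n : ℕ) : ℤ → ℝ :=
  fun i => ε⁻¹ * ∑ l ∈ b.support, b l * (ε⁻¹ * gridHeat a n (i + l))

/-!
On the dual torus `Id + ε²Δ_ε` is multiplication by the real symbol `m = 1 + ν̂/(2ν̄)`, so by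
Parseval the spatial sum at time `nε²` is `ε⁻⁴ ∫ m²ⁿ |π̂|² μ̂(-·, ·)`. Away from `0` we have
`|m| < 1`, and the geometric series over `n` produces `1/(1 - m²) = 4ν̄²/(-ν̂ (4ν̄ + ν̂))`. This is
singular at `0`, but `ν̂` vanishes there exactly to second order while `π̂(θ) π̂(-θ)` vanishes at
least to second order, so the product is integrable and dominated convergence applies. Absolute
summability in space-time reduces by `2|uv| ≤ u² + v²` to the case `B_ε(φ, ψ) = φψ`.
-/

open MeasureTheory Function Set

section GeometricSeries

variable {α E : Type*} [MeasurableSpace α] [NormedAddCommGroup E] [NormedSpace ℝ E]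

lemma hasSum_integral_pow_smul {μ : Measure α} {A : α → E} {r : α → ℝ}
    (hA : AEStronglyMeasurable A μ) (hr : AEStronglyMeasurable r μ)
    (hr0 : ∀ᵐ x ∂μ, 0 ≤ r x) (hr1 : ∀ᵐ x ∂μ, r x < 1)
    (hint : Integrable (fun x => (1 - r x)⁻¹ • A x) μ) :
    HasSum (fun n : ℕ => ∫ x, r x ^ n • A x ∂μ) (∫ x, (1 - r x)⁻¹ • A x ∂μ) := by
  refine hasSum_integral_of_dominated_convergence (fun n x => r x ^ n * ‖A x‖)
    (fun n => (hr.pow n).smul hA) (fun n => ?_) ?_ (hint.norm.congr ?_) ?_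
  · filter_upwards [hr0] with x hx0
    rw [norm_smul, norm_pow, Real.norm_of_nonneg hx0]
  · filter_upwards [hr0, hr1] with x hx0 hx1
    exact (summable_geometric_of_lt_one hx0 hx1).mul_right _
  · filter_upwards [hr0, hr1] with x hx0 hx1
    rw [tsum_mul_right, tsum_geometric_of_lt_one hx0 hx1, norm_smul,
      Real.norm_of_nonneg (inv_nonneg.2 (sub_nonneg.2 hx1.le))]
  · filter_upwards [hr0, hr1] with x hx0 hx1
    exact (hasSum_geometric_of_lt_one hx0 hx1).smul_const _

end GeometricSeries

section GridFourier

/-- The character `θ ↦ e^{-2πikθ}` of the dual torus. -/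
def gridChar (k : ℤ) (θ : ℝ) : ℂ :=
  Complex.exp (-(2 * Real.pi * k * θ) * Complex.I)

lemma gridChar_eq_fourier (k : ℤ) (θ : ℝ) : gridChar k θ = fourier (-k) (θ : UnitAddCircle) := by
  rw [fourier_coe_apply, gridChar]
  push_cast
  ring_nf

lemma norm_gridChar (k : ℤ) (θ : ℝ) : ‖gridChar k θ‖ = 1 := by
  rw [gridChar_eq_fourier, fourier_apply, Circle.norm_coe]

@[fun_prop]
lemma differentiable_gridChar (k : ℤ) : Differentiable ℝ (gridChar k) := by
  unfold gridChar
  fun_prop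

@[fun_prop]
lemma continuous_gridChar (k : ℤ) : Continuous (gridChar k) :=
  (differentiable_gridChar k).continuous

lemma gridChar_zero_left (θ : ℝ) : gridChar 0 θ = 1 := by simp [gridChar]

lemma gridChar_zero_right (k : ℤ) : gridChar k 0 = 1 := by simp [gridChar]

lemma gridChar_add (k l : ℤ) (θ : ℝ) : gridChar (k + l) θ = gridChar k θ * gridChar l θ := by
  simp only [gridChar_eq_fourier, neg_add, fourier_add]

lemma gridChar_neg_left (k : ℤ) (θ : ℝ) : gridChar (-k) θ = gridChar k (-θ) := by
  simp [gridChar]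

lemma gridChar_neg_right (k : ℤ) (θ : ℝ) :
    gridChar k (-θ) = starRingEnd ℂ (gridChar k θ) := by
  rw [← gridChar_neg_left, gridChar_eq_fourier, gridChar_eq_fourier, fourier_neg]

lemma integral_gridChar (k : ℤ) :
    ∫ θ in (-(1 / 2 : ℝ))..(1 / 2), gridChar k θ = if k = 0 then 1 else 0 := by
  have hcoeff := fourierCoeff_eq_intervalIntegral (T := 1) (fourier (-k)) 0 (-(1 / 2))
  rw [fourierCoeff_fourier, Pi.single_apply, show (-(1 / 2) + 1 : ℝ) = 1 / 2 by norm_num] at hcoeff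
  simpa [gridChar_eq_fourier, eq_comm (a := (0 : ℤ))] using hcoeff.symm

/-- The discrete Fourier transform `Σ_i h(i) e^{2πiiθ}` of a grid function. The sign of the exponent
is opposite to that of `piHat`, so that `φ ↦ Σ_l b(l) φ(· + l)` becomes multiplication by
`piHat b`. -/
def gridFourier (h : ℤ → ℝ) (θ : ℝ) : ℂ := ∑' i : ℤ, (h i : ℂ) * gridChar (-i) θ

variable {h g : ℤ → ℝ}

lemma hasFiniteSupport_comp_add_right (hh : h.HasFiniteSupport) (l : ℤ) :
    (fun i => h (i + l)).HasFiniteSupport :=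
  hh.preimage (f := fun i => i + l) (add_left_injective l).injOn

lemma hasFiniteSupport_const_mul (t : ℝ) (hh : h.HasFiniteSupport) :
    (fun i => t * h i).HasFiniteSupport :=
  hh.mul_right fun _ => t

lemma hasFiniteSupport_sum_mul_shift (s : Finset ℤ) (w : ℤ → ℝ) (hh : h.HasFiniteSupport) :
    (fun i => ∑ l ∈ s, w l * h (i + l)).HasFiniteSupport :=
  .sum (fun l => hasFiniteSupport_const_mul (w l) (hasFiniteSupport_comp_add_right hh l)) s

lemma summable_ofReal_mul (hh : h.HasFiniteSupport) (w : ℤ → ℂ) :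
    Summable fun i => (h i : ℂ) * w i :=
  summable_of_hasFiniteSupport
    ((hh.fun_comp (g := ((↑) : ℝ → ℂ)) Complex.ofReal_zero).mul_left w)

lemma eq_zero_of_notMem_toFinset (hh : h.HasFiniteSupport) {i : ℤ} (hi : i ∉ hh.toFinset) :
    h i = 0 :=
  notMem_support.1 (mt (Finite.mem_toFinset hh).2 hi)

lemma gridFourier_eq_sum (hh : h.HasFiniteSupport) (θ : ℝ) :
    gridFourier h θ = ∑ i ∈ hh.toFinset, (h i : ℂ) * gridChar (-i) θ :=
  tsum_eq_sum fun i hi => by simp [eq_zero_of_notMem_toFinset hh hi]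

@[fun_prop]
lemma continuous_gridFourier (hh : h.HasFiniteSupport) : Continuous (gridFourier h) := by
  simp only [funext (gridFourier_eq_sum hh)]
  fun_prop

lemma gridFourier_const_mul (t : ℝ) (h : ℤ → ℝ) (θ : ℝ) :
    gridFourier (fun i => t * h i) θ = t * gridFourier h θ := by
  simp only [gridFourier, Complex.ofReal_mul, mul_assoc, tsum_mul_left]

lemma gridFourier_add (hh : h.HasFiniteSupport) (hg : g.HasFiniteSupport) (θ : ℝ) :
    gridFourier (fun i => h i + g i) θ = gridFourier h θ + gridFourier g θ := by
  simp only [gridFourier, Complex.ofReal_add, add_mul]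
  exact (summable_ofReal_mul hh _).tsum_add (summable_ofReal_mul hg _)

lemma gridFourier_shift (h : ℤ → ℝ) (l : ℤ) (θ : ℝ) :
    gridFourier (fun i => h (i + l)) θ = gridChar l θ * gridFourier h θ := by
  have hchar (i : ℤ) : gridChar (-i) θ = gridChar l θ * gridChar (-(i + l)) θ := by
    rw [← gridChar_add, neg_add_rev, add_neg_cancel_left]
  rw [gridFourier, gridFourier, ← tsum_mul_left,
    ← (Equiv.addRight l).tsum_eq fun i => gridChar l θ * ((h i : ℂ) * gridChar (-i) θ)]
  refine tsum_congr fun i => ?_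
  rw [Equiv.coe_addRight, hchar i, mul_left_comm]

lemma gridFourier_sum_mul_shift (s : Finset ℤ) (w : ℤ → ℝ) (hh : h.HasFiniteSupport) (θ : ℝ) :
    gridFourier (fun i => ∑ l ∈ s, w l * h (i + l)) θ =
      (∑ l ∈ s, (w l : ℂ) * gridChar l θ) * gridFourier h θ := by
  have hterm (l : ℤ) : (w l : ℂ) * gridChar l θ * gridFourier h θ =
      gridFourier (fun i => w l * h (i + l)) θ := by
    rw [gridFourier_const_mul, gridFourier_shift, mul_assoc]
  rw [Finset.sum_mul, Finset.sum_congr rfl fun l _ => hterm l]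
  simp only [gridFourier, Complex.ofReal_sum, Finset.sum_mul]
  exact Summable.tsum_finsetSum fun l _ =>
    summable_ofReal_mul (hasFiniteSupport_const_mul (w l) (hasFiniteSupport_comp_add_right hh l)) _

lemma integral_gridChar_mul_gridFourier (hg : g.HasFiniteSupport) (i : ℤ) :
    ∫ θ in (-(1 / 2 : ℝ))..(1 / 2), gridChar i θ * gridFourier g θ = g i := by
  have hexpand (θ : ℝ) : gridChar i θ * gridFourier g θ =
      ∑ j ∈ hg.toFinset, (g j : ℂ) * gridChar (i - j) θ := by
    simp only [gridFourier_eq_sum hg, Finset.mul_sum, sub_eq_add_neg, gridChar_add]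
    exact Finset.sum_congr rfl fun j _ => mul_left_comm _ _ _
  simp only [hexpand]
  rw [intervalIntegral.integral_finsetSum fun j _ =>
    Continuous.intervalIntegrable (by fun_prop) _ _]
  simp only [intervalIntegral.integral_const_mul, integral_gridChar, sub_eq_zero, mul_ite, mul_one,
    mul_zero, Finset.sum_ite_eq]
  exact ite_eq_left_iff.2 fun hi => by simp [eq_zero_of_notMem_toFinset hg hi]

lemma tsum_mul_eq_integral_gridFourier (hh : h.HasFiniteSupport) (hg : g.HasFiniteSupport) :
    ((∑' i, h i * g i : ℝ) : ℂ) =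
      ∫ θ in (-(1 / 2 : ℝ))..(1 / 2), gridFourier h (-θ) * gridFourier g θ := by
  simp only [gridFourier_eq_sum hh, ← gridChar_neg_left, neg_neg, Finset.sum_mul, mul_assoc]
  rw [intervalIntegral.integral_finsetSum fun i _ =>
    Continuous.intervalIntegrable (by fun_prop (disch := assumption)) _ _]
  simp only [intervalIntegral.integral_const_mul, integral_gridChar_mul_gridFourier hg]
  rw [tsum_eq_sum (s := hh.toFinset) fun i hi => by simp [eq_zero_of_notMem_toFinset hh hi]]
  push_cast
  rfl

end GridFourier

section GridProduct

variable {h g : ℤ → ℝ}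

/-- The discrete product `B_ε(φ, ψ)(εi) = Σ_{k,l} c(k,l) φ(ε(i+k)) ψ(ε(i+l))`, on grid indices. -/
def gridProduct (c : (ℤ × ℤ) →₀ ℝ) (h g : ℤ → ℝ) (i : ℤ) : ℝ :=
  ∑ q ∈ c.support, c q * h (i + q.1) * g (i + q.2)

lemma muHat_neg_self (c : (ℤ × ℤ) →₀ ℝ) (θ : ℝ) :
    muHat c (-θ) θ = ∑ q ∈ c.support, (c q : ℂ) * (gridChar q.1 (-θ) * gridChar q.2 θ) := by
  simp only [muHat, gridChar, ← Complex.exp_add]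
  refine Finset.sum_congr rfl fun q _ => ?_
  push_cast
  ring_nf

lemma continuous_muHat_neg_self (c : (ℤ × ℤ) →₀ ℝ) : Continuous fun θ => muHat c (-θ) θ := by
  simp only [muHat_neg_self]
  fun_prop

lemma tsum_gridProduct_eq_integral (c : (ℤ × ℤ) →₀ ℝ)
    (hh : h.HasFiniteSupport) (hg : g.HasFiniteSupport) :
    ((∑' i, gridProduct c h g i : ℝ) : ℂ) =
      ∫ θ in (-(1 / 2 : ℝ))..(1 / 2),
        gridFourier h (-θ) * gridFourier g θ * muHat c (-θ) θ := by
  have hexpand (θ : ℝ) : gridFourier h (-θ) * gridFourier g θ * muHat c (-θ) θ =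
      ∑ q ∈ c.support, (c q : ℂ) * (gridFourier (fun i => h (i + q.1)) (-θ) *
        gridFourier (fun i => g (i + q.2)) θ) := by
    simp only [muHat_neg_self, gridFourier_shift, Finset.mul_sum]
    exact Finset.sum_congr rfl fun q _ => by ring
  have hshift (q : ℤ × ℤ) := hasFiniteSupport_comp_add_right hh q.1
  have gshift (q : ℤ × ℤ) := hasFiniteSupport_comp_add_right hg q.2
  simp only [hexpand]
  rw [intervalIntegral.integral_finsetSum fun q _ => Continuous.intervalIntegrable (by
    have := continuous_gridFourier (hshift q)
    have := continuous_gridFourier (gshift q)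
    fun_prop) _ _]
  simp only [intervalIntegral.integral_const_mul,
    ← tsum_mul_eq_integral_gridFourier (hshift _) (gshift _), gridProduct, mul_assoc]
  have hsummable (q : ℤ × ℤ) : Summable fun i => h (i + q.1) * g (i + q.2) :=
    summable_of_hasFiniteSupport ((hshift q).mul_left _)
  rw [Summable.tsum_finsetSum fun q _ => (hsummable q).mul_left _]
  simp only [tsum_mul_left, Complex.ofReal_sum, Complex.ofReal_mul]

lemma summable_gridProduct {ι : Type*} {u v : ι → ℤ → ℝ} (c : (ℤ × ℤ) →₀ ℝ)
    (hu : Summable fun p : ι × ℤ => u p.1 p.2 ^ 2)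
    (hv : Summable fun p : ι × ℤ => v p.1 p.2 ^ 2) :
    Summable fun p : ι × ℤ => gridProduct c (u p.1) (v p.1) p.2 := by
  have shift {w : ι → ℤ → ℝ} (hw : Summable fun p : ι × ℤ => w p.1 p.2 ^ 2) (k : ℤ) :
      Summable fun p : ι × ℤ => w p.1 (p.2 + k) ^ 2 :=
    ((Equiv.refl ι).prodCongr (Equiv.addRight k)).summable_iff.2 hw
  refine summable_sum fun q _ => ?_
  simp only [mul_assoc]
  refine .mul_left _ (.of_norm_bounded ((shift hu q.1).add (shift hv q.2)) fun p => ?_)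
  rw [norm_mul, ← sq_abs, ← sq_abs (v _ _), ← Real.norm_eq_abs, ← Real.norm_eq_abs]
  have hpos := mul_nonneg (norm_nonneg (u p.1 (p.2 + q.1))) (norm_nonneg (v p.1 (p.2 + q.2)))
  linarith [two_mul_le_add_sq ‖u p.1 (p.2 + q.1)‖ ‖v p.1 (p.2 + q.2)‖]

end GridProduct

section Symbols

variable {a b : ℤ →₀ ℝ} {θ : ℝ}

/-- The total mass `ν̄ = Σ_k |a(k)|`. -/
def nuBar (a : ℤ →₀ ℝ) : ℝ := ∑ k ∈ a.support, |a k|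

lemma nuHat_eq_sum_gridChar (a : ℤ →₀ ℝ) (θ : ℝ) :
    nuHat a θ = ∑ k ∈ a.support, (a k : ℂ) * gridChar k θ := rfl

@[fun_prop]
lemma continuous_nuHat (a : ℤ →₀ ℝ) : Continuous (nuHat a) := by
  simp only [funext (nuHat_eq_sum_gridChar a)]
  fun_prop

lemma nuHat_neg (a : ℤ →₀ ℝ) (θ : ℝ) : nuHat a (-θ) = starRingEnd ℂ (nuHat a θ) := by
  simp [nuHat_eq_sum_gridChar, gridChar_neg_right]

lemma norm_nuHat_le (a : ℤ →₀ ℝ) (θ : ℝ) : ‖nuHat a θ‖ ≤ nuBar a :=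
  norm_sum_le_of_le _ fun k _ => by
    rw [norm_mul, Complex.norm_real, Real.norm_eq_abs]
    exact (congrArg _ (norm_gridChar k θ)).trans (mul_one _) |>.le

lemma nuHat_eq_sum_cos (ha_symm : ∀ k, a (-k) = a k) (θ : ℝ) :
    nuHat a θ = ((∑ k ∈ a.support, a k * Real.cos (2 * π * k * θ) : ℝ) : ℂ) := by
  have hreflect : nuHat a θ = ∑ k ∈ a.support, (a k : ℂ) * gridChar (-k) θ :=
    Finset.sum_equiv (Equiv.neg ℤ) (fun k => by simp [ha_symm])
      fun k _ => by simp [ha_symm, gridChar]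
  have haverage : nuHat a θ = (nuHat a θ + nuHat a θ) / 2 := by ring
  rw [haverage]
  nth_rewrite 2 [hreflect]
  rw [nuHat_eq_sum_gridChar, ← Finset.sum_add_distrib, Finset.sum_div]
  push_cast
  refine Finset.sum_congr rfl fun k _ => ?_
  rw [Complex.cos, gridChar, gridChar]
  push_cast
  ring_nf

/-- The paper's `f(θ) = -ν̂(θ)/θ²`, extended continuously to `θ = 0`
by means of `1 - cos(2x) = 2 sin² x`. -/
def fExt (a : ℤ →₀ ℝ) (θ : ℝ) : ℝ :=
  2 * π ^ 2 * ∑ k ∈ a.support, (k : ℝ) ^ 2 * a k * Real.sinc (π * k * θ) ^ 2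

@[fun_prop]
lemma continuous_fExt (a : ℤ →₀ ℝ) : Continuous (fExt a) := by
  unfold fExt
  have := Real.continuous_sinc
  fun_prop

lemma fExt_zero (a : ℤ →₀ ℝ) : fExt a 0 = 2 * π ^ 2 * ∑ k ∈ a.support, (k : ℝ) ^ 2 * a k := by
  simp [fExt]

lemma sinc_mul_self (x : ℝ) : Real.sinc x * x = Real.sin x := by
  rw [Real.sinc_eq_dslope]
  simpa [mul_comm] using sub_smul_dslope Real.sin 0 x

lemma nuHat_eq_fExt (ha_symm : ∀ k, a (-k) = a k) (ha0 : ∑ k ∈ a.support, a k = 0) (θ : ℝ) :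
    nuHat a θ = ((-(fExt a θ * θ ^ 2) : ℝ) : ℂ) := by
  have hcos (k : ℤ) : a k * Real.cos (2 * π * k * θ) =
      a k - 2 * π ^ 2 * (k ^ 2 * a k * Real.sinc (π * k * θ) ^ 2) * θ ^ 2 := by
    rw [show 2 * π * k * θ = 2 * (π * k * θ) by ring, Real.cos_two_mul, Real.cos_sq',
      ← sinc_mul_self]
    ring
  simp only [nuHat_eq_sum_cos ha_symm, hcos, Finset.sum_sub_distrib, ha0, zero_sub, fExt,
    Finset.mul_sum, Finset.sum_mul]

lemma fExt_pos {s : Set ℝ} (hs : IsPreconnected s) (h0 : 0 ∈ s)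
    (ha_symm : ∀ k, a (-k) = a k) (ha0 : ∑ k ∈ a.support, a k = 0)
    (ha2 : 0 < ∑ k ∈ a.support, (k : ℝ) ^ 2 * a k)
    (hzero : ∀ θ ∈ s, nuHat a θ = 0 → θ = 0) (hθ : θ ∈ s) : 0 < fExt a θ := by
  have hf0 : 0 < fExt a 0 := by rw [fExt_zero]; positivity
  by_contra! hneg
  obtain ⟨x, hx, hfx⟩ := hs.intermediate_value hθ h0 (continuous_fExt a).continuousOn
    ⟨hneg, hf0.le⟩
  have hx0 : x = 0 := hzero x hx (by simp [nuHat_eq_fExt ha_symm ha0, hfx])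
  exact hf0.ne' (hx0 ▸ hfx)

lemma nuBar_pos (ha_symm : ∀ k, a (-k) = a k) (ha0 : ∑ k ∈ a.support, a k = 0)
    (hθ : θ ≠ 0) (hf : 0 < fExt a θ) : 0 < nuBar a := by
  refine lt_of_lt_of_le (norm_pos_iff.2 ?_) (norm_nuHat_le a θ)
  rw [nuHat_eq_fExt ha_symm ha0, Complex.ofReal_ne_zero]
  exact neg_ne_zero.2 (by positivity)

/-- The Fourier multiplier `1 + ν̂(θ)/(2ν̄)` of `Id + ε²Δ_ε`. -/
def heatSymbol (a : ℤ →₀ ℝ) (θ : ℝ) : ℂ := 1 + nuHat a θ / (2 * nuBar a)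

@[fun_prop]
lemma continuous_heatSymbol (a : ℤ →₀ ℝ) : Continuous (heatSymbol a) := by
  unfold heatSymbol
  fun_prop

lemma heatSymbol_neg_mul_self (a : ℤ →₀ ℝ) (θ : ℝ) :
    heatSymbol a (-θ) * heatSymbol a θ = ((‖heatSymbol a θ‖ ^ 2 : ℝ) : ℂ) := by
  have hconj : heatSymbol a (-θ) = starRingEnd ℂ (heatSymbol a θ) := by
    simp [heatSymbol, nuHat_neg, Complex.conj_ofNat]
  rw [hconj, Complex.conj_mul', Complex.ofReal_pow]

lemma heatSymbol_eq_ofReal (ha_symm : ∀ k, a (-k) = a k) (ha0 : ∑ k ∈ a.support, a k = 0)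
    (θ : ℝ) : heatSymbol a θ = ((1 - fExt a θ * θ ^ 2 / (2 * nuBar a) : ℝ) : ℂ) := by
  rw [heatSymbol, nuHat_eq_fExt ha_symm ha0]
  push_cast
  ring

lemma heatSymbol_sq (ha_symm : ∀ k, a (-k) = a k) (ha0 : ∑ k ∈ a.support, a k = 0) (θ : ℝ) :
    heatSymbol a θ ^ 2 = ((‖heatSymbol a θ‖ ^ 2 : ℝ) : ℂ) := by
  rw [heatSymbol_eq_ofReal ha_symm ha0, Complex.norm_real, Real.norm_eq_abs, sq_abs,
    Complex.ofReal_pow]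

lemma norm_heatSymbol_lt_one (ha_symm : ∀ k, a (-k) = a k) (ha0 : ∑ k ∈ a.support, a k = 0)
    (hθ : θ ≠ 0) (hf : 0 < fExt a θ) : ‖heatSymbol a θ‖ < 1 := by
  have hν := nuBar_pos ha_symm ha0 hθ hf
  have hle := norm_nuHat_le a θ
  rw [nuHat_eq_fExt ha_symm ha0, Complex.norm_real, norm_neg, Real.norm_of_nonneg (by positivity)]
    at hle
  have hpos : 0 < fExt a θ * θ ^ 2 / (2 * nuBar a) := by positivity
  have hlt : fExt a θ * θ ^ 2 / (2 * nuBar a) < 1 := by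
    rw [div_lt_one (by positivity)]
    linarith
  rw [heatSymbol_eq_ofReal ha_symm ha0, Complex.norm_real, Real.norm_of_nonneg (by linarith)]
  linarith

lemma piHat_eq_sum_gridChar (b : ℤ →₀ ℝ) (θ : ℝ) :
    piHat b θ = ∑ k ∈ b.support, (b k : ℂ) * gridChar k θ := rfl

lemma differentiable_piHat (b : ℤ →₀ ℝ) : Differentiable ℝ (piHat b) := by
  simp only [funext (piHat_eq_sum_gridChar b)]
  fun_prop

@[fun_prop]
lemma continuous_piHat (b : ℤ →₀ ℝ) : Continuous (piHat b) :=
  (differentiable_piHat b).continuous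

/-- The paper's `g(θ) = π̂(θ)/(iθ)`, extended continuously to `θ = 0`. -/
def gExt (b : ℤ →₀ ℝ) (θ : ℝ) : ℂ := dslope (piHat b) 0 θ / Complex.I

@[fun_prop]
lemma continuous_gExt (b : ℤ →₀ ℝ) : Continuous (gExt b) := by
  have hslope : Continuous (dslope (piHat b) 0) := continuousOn_univ.1 <|
    (continuousOn_dslope Filter.univ_mem).2
      ⟨(continuous_piHat b).continuousOn, differentiable_piHat b 0⟩
  exact hslope.div_const _

lemma piHat_div_I_mul (hb0 : ∑ k ∈ b.support, b k = 0) (hθ : θ ≠ 0) :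
    piHat b θ / (Complex.I * θ) = gExt b θ := by
  have hzero : piHat b 0 = 0 := by
    simp only [piHat_eq_sum_gridChar, gridChar_zero_right, mul_one, ← Complex.ofReal_sum, hb0,
      Complex.ofReal_zero]
  have hθ' : (θ : ℂ) ≠ 0 := Complex.ofReal_ne_zero.2 hθ
  rw [gExt, dslope_of_ne _ hθ, slope_def_module, hzero, sub_zero, sub_zero, Complex.real_smul,
    Complex.ofReal_inv]
  field_simp

end Symbols

section Integrand

variable {a b : ℤ →₀ ℝ} {θ : ℝ}

/-- The integrand `g(θ) g(-θ) · 4ν̄² / (f(θ) (4ν̄ + ν̂(θ))) · μ̂(-θ, θ)`. At `θ = 0` the quotients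
defining `f` and `g` are divisions by zero, so the value there is junk. -/
def renormIntegrand (a b : ℤ →₀ ℝ) (c : (ℤ × ℤ) →₀ ℝ) (θ : ℝ) : ℂ :=
  (piHat b θ / (Complex.I * θ)) * (piHat b (-θ) / (Complex.I * (-θ))) *
    ((4 * (nuBar a : ℂ) ^ 2) /
      ((-(nuHat a θ) / (θ : ℂ) ^ 2) * (4 * (nuBar a : ℂ) + nuHat a θ))) *
    muHat c (-θ) θ

lemma renormIntegrand_eq_ext (ha_symm : ∀ k, a (-k) = a k) (ha0 : ∑ k ∈ a.support, a k = 0)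
    (hb0 : ∑ k ∈ b.support, b k = 0) (c : (ℤ × ℤ) →₀ ℝ) (hθ : θ ≠ 0) :
    renormIntegrand a b c θ = gExt b θ * gExt b (-θ) *
      ((4 * (nuBar a : ℂ) ^ 2) / (fExt a θ * (4 * (nuBar a : ℂ) + nuHat a θ))) *
      muHat c (-θ) θ := by
  have hf : -(nuHat a θ) / (θ : ℂ) ^ 2 = fExt a θ := by
    rw [nuHat_eq_fExt ha_symm ha0, ← Complex.ofReal_neg, neg_neg, Complex.ofReal_mul,
      Complex.ofReal_pow, mul_div_cancel_right₀ _ (by simpa using hθ)]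
  rw [renormIntegrand, hf, piHat_div_I_mul hb0 hθ, ← Complex.ofReal_neg,
    piHat_div_I_mul hb0 (neg_ne_zero.2 hθ)]

lemma intervalIntegrable_renormIntegrand {x y : ℝ} (ha_symm : ∀ k, a (-k) = a k)
    (ha0 : ∑ k ∈ a.support, a k = 0) (hν : 0 < nuBar a) (hf : ∀ θ ∈ uIcc x y, 0 < fExt a θ)
    (hb0 : ∑ k ∈ b.support, b k = 0) (c : (ℤ × ℤ) →₀ ℝ) :
    IntervalIntegrable (renormIntegrand a b c) volume x y := by
  have hdenom (θ : ℝ) : 4 * (nuBar a : ℂ) + nuHat a θ ≠ 0 := fun h => by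
    have hnorm := norm_nuHat_le a θ
    rw [eq_neg_of_add_eq_zero_right h, norm_neg, norm_mul, Complex.norm_real,
      Real.norm_of_nonneg hν.le, Complex.norm_ofNat] at hnorm
    linarith
  have hcont : ContinuousOn (fun θ => gExt b θ * gExt b (-θ) *
      ((4 * (nuBar a : ℂ) ^ 2) / (fExt a θ * (4 * (nuBar a : ℂ) + nuHat a θ))) *
      muHat c (-θ) θ) (uIcc x y) := by
    refine ContinuousOn.mul (.mul (by fun_prop) (.div (by fun_prop) (by fun_prop) ?_))
      (continuous_muHat_neg_self c).continuousOn
    exact fun θ hθ => mul_ne_zero (Complex.ofReal_ne_zero.2 (hf θ hθ).ne') (hdenom θ)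
  refine hcont.intervalIntegrable.congr_ae (ae_restrict_of_ae ?_)
  filter_upwards [Measure.ae_ne volume 0] with θ hθ
  exact (renormIntegrand_eq_ext ha_symm ha0 hb0 c hθ).symm

lemma renormIntegrand_eq_resolvent (hν : nuBar a ≠ 0) (b : ℤ →₀ ℝ) (c : (ℤ × ℤ) →₀ ℝ)
    (hθ : θ ≠ 0) :
    renormIntegrand a b c θ =
      (1 - heatSymbol a θ ^ 2)⁻¹ * (piHat b (-θ) * piHat b θ * muHat c (-θ) θ) := by
  have hθ' : (θ : ℂ) ≠ 0 := Complex.ofReal_ne_zero.2 hθ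
  have hν' : (nuBar a : ℂ) ≠ 0 := Complex.ofReal_ne_zero.2 hν
  have hfactor : 1 - heatSymbol a θ ^ 2 =
      -(nuHat a θ) * (4 * nuBar a + nuHat a θ) / (4 * (nuBar a : ℂ) ^ 2) := by
    rw [heatSymbol]
    field_simp
    ring
  have hsign : (Complex.I * θ) * (Complex.I * (-θ)) = (θ : ℂ) ^ 2 := by
    linear_combination (-(θ : ℂ) ^ 2) * Complex.I_mul_I
  rw [hfactor, inv_div, renormIntegrand, div_mul_div_comm, hsign]
  field_simp

end Integrand

section HeatKernel

variable {a b : ℤ →₀ ℝ}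

lemma gridHeat_succ (a : ℤ →₀ ℝ) (n : ℕ) : gridHeat a (n + 1) = gridStep a (gridHeat a n) :=
  iterate_succ_apply' _ _ _

lemma hasFiniteSupport_gridStep (a : ℤ →₀ ℝ) {h : ℤ → ℝ} (hh : h.HasFiniteSupport) :
    (gridStep a h).HasFiniteSupport :=
  .fun_add hh (hasFiniteSupport_const_mul _ (hasFiniteSupport_sum_mul_shift _ _ hh))

lemma hasFiniteSupport_gridHeat (a : ℤ →₀ ℝ) (n : ℕ) : (gridHeat a n).HasFiniteSupport := by
  induction n with
  | zero => exact (finite_singleton 0).subset fun i hi => by_contra fun h => hi (if_neg h)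
  | succ n ih => rw [gridHeat_succ]; exact hasFiniteSupport_gridStep a ih

lemma hasFiniteSupport_DPgrid (a b : ℤ →₀ ℝ) (ε : ℝ) (n : ℕ) :
    (DPgrid a b ε n).HasFiniteSupport :=
  hasFiniteSupport_const_mul _ (hasFiniteSupport_sum_mul_shift _ _
    (hasFiniteSupport_const_mul _ (hasFiniteSupport_gridHeat a n)))

lemma gridFourier_gridStep (a : ℤ →₀ ℝ) {h : ℤ → ℝ} (hh : h.HasFiniteSupport) (θ : ℝ) :
    gridFourier (gridStep a h) θ = heatSymbol a θ * gridFourier h θ := by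
  have hsum := hasFiniteSupport_sum_mul_shift a.support a hh
  calc gridFourier (gridStep a h) θ
      = gridFourier h θ + ((2 * nuBar a)⁻¹ : ℝ) * (nuHat a θ * gridFourier h θ) := by
        rw [nuHat_eq_sum_gridChar, ← gridFourier_sum_mul_shift _ _ hh, ← gridFourier_const_mul,
          ← gridFourier_add hh (hasFiniteSupport_const_mul _ hsum)]
        rfl
    _ = heatSymbol a θ * gridFourier h θ := by
        rw [heatSymbol]
        push_cast
        ring

lemma gridFourier_gridHeat (a : ℤ →₀ ℝ) (n : ℕ) (θ : ℝ) :
    gridFourier (gridHeat a n) θ = heatSymbol a θ ^ n := by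
  induction n with
  | zero =>
    rw [gridFourier, tsum_eq_single 0 fun i hi => by simp [gridHeat, hi]]
    simp [gridHeat, gridChar_zero_left]
  | succ n ih =>
    rw [gridHeat_succ, gridFourier_gridStep a (hasFiniteSupport_gridHeat a n), ih, pow_succ']

lemma gridFourier_DPgrid (a b : ℤ →₀ ℝ) (ε : ℝ) (n : ℕ) (θ : ℝ) :
    gridFourier (DPgrid a b ε n) θ = (ε : ℂ)⁻¹ ^ 2 * (piHat b θ * heatSymbol a θ ^ n) := by
  have hheat := hasFiniteSupport_const_mul ε⁻¹ (hasFiniteSupport_gridHeat a n)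
  unfold DPgrid
  rw [gridFourier_const_mul, gridFourier_sum_mul_shift _ _ hheat, ← piHat_eq_sum_gridChar,
    gridFourier_const_mul, gridFourier_gridHeat]
  push_cast
  ring

lemma tsum_gridProduct_DPgrid (a b : ℤ →₀ ℝ) (c : (ℤ × ℤ) →₀ ℝ) (ε : ℝ) (n : ℕ) :
    ((∑' i, gridProduct c (DPgrid a b ε n) (DPgrid a b ε n) i : ℝ) : ℂ) =
      (ε : ℂ)⁻¹ ^ 4 * ∫ θ in (-(1 / 2 : ℝ))..(1 / 2),
        (‖heatSymbol a θ‖ ^ 2) ^ n • (piHat b (-θ) * piHat b θ * muHat c (-θ) θ) := by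
  have hfin := hasFiniteSupport_DPgrid a b ε n
  rw [tsum_gridProduct_eq_integral c hfin hfin, ← intervalIntegral.integral_const_mul]
  congr with θ
  rw [gridFourier_DPgrid, gridFourier_DPgrid, Complex.real_smul, Complex.ofReal_pow,
    ← heatSymbol_neg_mul_self]
  ring

lemma hasSum_tsum_gridProduct_DPgrid (ha_symm : ∀ k, a (-k) = a k)
    (ha0 : ∑ k ∈ a.support, a k = 0) (hf : ∀ θ ∈ Icc (-(1 / 2 : ℝ)) (1 / 2), 0 < fExt a θ)
    (hb0 : ∑ k ∈ b.support, b k = 0) (c : (ℤ × ℤ) →₀ ℝ) (ε : ℝ) :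
    HasSum (fun n => ((∑' i, gridProduct c (DPgrid a b ε n) (DPgrid a b ε n) i : ℝ) : ℂ))
      ((ε : ℂ)⁻¹ ^ 4 * ∫ θ in (-(1 / 2 : ℝ))..(1 / 2), renormIntegrand a b c θ) := by
  have hle : -(1 / 2 : ℝ) ≤ 1 / 2 := by norm_num
  have hν : 0 < nuBar a :=
    nuBar_pos ha_symm ha0 (by norm_num : (1 / 2 : ℝ) ≠ 0) (hf _ (right_mem_Icc.2 hle))
  set μ := volume.restrict (Ioc (-(1 / 2 : ℝ)) (1 / 2))
  have hne : ∀ᵐ θ ∂μ, θ ≠ 0 := ae_restrict_of_ae (Measure.ae_ne volume 0)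
  have hresolvent : renormIntegrand a b c =ᵐ[μ] fun θ =>
      (1 - ‖heatSymbol a θ‖ ^ 2)⁻¹ • (piHat b (-θ) * piHat b θ * muHat c (-θ) θ) := by
    filter_upwards [hne] with θ hθ
    rw [renormIntegrand_eq_resolvent hν.ne' b c hθ, heatSymbol_sq ha_symm ha0, Complex.real_smul]
    push_cast
    rfl
  have hlt : ∀ᵐ θ ∂μ, ‖heatSymbol a θ‖ ^ 2 < 1 := by
    filter_upwards [hne, ae_restrict_mem measurableSet_Ioc] with θ hθ hmem
    exact pow_lt_one₀ (norm_nonneg _)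
      (norm_heatSymbol_lt_one ha_symm ha0 hθ (hf θ (Ioc_subset_Icc_self hmem))) two_ne_zero
  have hint := intervalIntegrable_renormIntegrand ha_symm ha0 hν (by rwa [uIcc_of_le hle]) hb0 c
  rw [intervalIntegrable_iff_integrableOn_Ioc_of_le hle] at hint
  simp only [tsum_gridProduct_DPgrid, intervalIntegral.integral_of_le hle]
  rw [integral_congr_ae hresolvent]
  have hsource : Continuous fun θ => piHat b (-θ) * piHat b θ * muHat c (-θ) θ :=
    .mul (by fun_prop) (continuous_muHat_neg_self c)
  have hratio : Continuous fun θ => ‖heatSymbol a θ‖ ^ 2 := by fun_prop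
  exact (hasSum_integral_pow_smul hsource.aestronglyMeasurable hratio.aestronglyMeasurable
    (.of_forall fun θ => sq_nonneg _) hlt (hint.congr hresolvent)).mul_left _

lemma summable_sq_DPgrid (ha_symm : ∀ k, a (-k) = a k)
    (ha0 : ∑ k ∈ a.support, a k = 0) (hf : ∀ θ ∈ Icc (-(1 / 2 : ℝ)) (1 / 2), 0 < fExt a θ)
    (hb0 : ∑ k ∈ b.support, b k = 0) (ε : ℝ) :
    Summable fun p : ℕ × ℤ => DPgrid a b ε p.1 p.2 ^ 2 := by
  have hsq (h : ℤ → ℝ) (i : ℤ) : gridProduct (Finsupp.single (0, 0) 1) h h i = h i ^ 2 := by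
    simp [gridProduct, Finsupp.support_single, sq]
  have hsum := hasSum_tsum_gridProduct_DPgrid ha_symm ha0 hf hb0 (Finsupp.single (0, 0) 1) ε
  simp only [hsq] at hsum
  refine (summable_prod_of_nonneg fun p => sq_nonneg _).2
    ⟨fun n => summable_of_hasFiniteSupport ?_, Complex.summable_ofReal.1 hsum.summable⟩
  exact (hasFiniteSupport_DPgrid a b ε n).fun_comp (g := (· ^ 2)) (zero_pow two_ne_zero)

end HeatKernel

theorem statement18_general (a : ℤ →₀ ℝ) (ha_symm : ∀ k : ℤ, a (-k) = a k)
    (ha0 : ∑ k ∈ a.support, a k = 0) (ha2 : 0 < ∑ k ∈ a.support, (k : ℝ) ^ 2 * a k)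
    (ha_four : ∀ θ : ℝ, nuHat a θ = 0 → ∃ z : ℤ, θ = z)
    (b : ℤ →₀ ℝ) (hb0 : ∑ k ∈ b.support, b k = 0) (c : (ℤ × ℤ) →₀ ℝ) {ε : ℝ} (hε : ε ≠ 0) :
    Summable (fun p : ℕ × ℤ => |gridProduct c (DPgrid a b ε p.1) (DPgrid a b ε p.1) p.2|) ∧
    ((ε ^ 3 * ∑' n, ∑' i, gridProduct c (DPgrid a b ε n) (DPgrid a b ε n) i : ℝ) : ℂ) =
      (ε⁻¹ : ℝ) * ∫ θ in (-(1 / 2 : ℝ))..(1 / 2), renormIntegrand a b c θ ∧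
    IntervalIntegrable (renormIntegrand a b c) volume (-(1 / 2)) (1 / 2) := by
  have hle : -(1 / 2 : ℝ) ≤ 1 / 2 := by norm_num
  have hzero : ∀ θ ∈ Icc (-(1 / 2 : ℝ)) (1 / 2), nuHat a θ = 0 → θ = 0 := by
    rintro θ ⟨hlo, hhi⟩ hθ
    obtain ⟨z, rfl⟩ := ha_four θ hθ
    have hz : z = 0 := Int.abs_lt_one_iff.1 (by
      exact_mod_cast (abs_le.2 ⟨hlo, hhi⟩).trans_lt one_half_lt_one)
    exact_mod_cast hz
  have hf (θ : ℝ) (hθ : θ ∈ Icc (-(1 / 2 : ℝ)) (1 / 2)) : 0 < fExt a θ :=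
    fExt_pos isPreconnected_Icc (by norm_num) ha_symm ha0 ha2 hzero hθ
  have hν : 0 < nuBar a :=
    nuBar_pos ha_symm ha0 (by norm_num : (1 / 2 : ℝ) ≠ 0) (hf _ (right_mem_Icc.2 hle))
  have hsq := summable_sq_DPgrid ha_symm ha0 hf hb0 ε
  refine ⟨(summable_gridProduct c hsq hsq).abs, ?_,
    intervalIntegrable_renormIntegrand ha_symm ha0 hν (by rwa [uIcc_of_le hle]) hb0 c⟩
  have hε' : (ε : ℂ) ≠ 0 := Complex.ofReal_ne_zero.2 hε
  rw [Complex.ofReal_mul, Complex.ofReal_tsum,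
    (hasSum_tsum_gridProduct_DPgrid ha_symm ha0 hf hb0 c ε).tsum_eq]
  push_cast
  field_simp

/-- exact value of the renormalization constant `C^{⟨2⟩,ε}`. -/
theorem statement18 (a : ℤ →₀ ℝ)
    (ha_symm : ∀ k : ℤ, a (-k) = a k)
    (ha0 : ∑ k ∈ a.support, a k = 0)
    (ha2 : ∑ k ∈ a.support, ((k : ℝ)) ^ 2 * a k = 2)
    (ha_four : ∀ θ : ℝ, nuHat a θ = 0 → ∃ z : ℤ, θ = (z : ℝ))
    (b : ℤ →₀ ℝ)
    (hb0 : ∑ k ∈ b.support, b k = 0)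
    (hb1 : ∑ k ∈ b.support, (k : ℝ) * b k = 1)
    (c : (ℤ × ℤ) →₀ ℝ) (hc : ∀ k l : ℤ, c (k, l) = c (l, k))
    (N : ℕ) (ε : ℝ) (hε : ε = ((2 : ℝ) ^ N)⁻¹) :
    Summable (fun p : ℕ × ℤ =>
      |∑ q ∈ c.support, c q * DPgrid a b ε p.1 (p.2 + q.1) * DPgrid a b ε p.1 (p.2 + q.2)|) ∧
    ((ε ^ 3 * ∑' n : ℕ, ∑' i : ℤ,
        ∑ q ∈ c.support, c q * DPgrid a b ε n (i + q.1) * DPgrid a b ε n (i + q.2) : ℝ) : ℂ) =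
      (ε⁻¹ : ℝ) * ∫ k in (-(1/2 : ℝ))..(1/2 : ℝ),
        (piHat b k / (Complex.I * k)) * (piHat b (-k) / (Complex.I * (-k))) *
          ((4 * ((∑ l ∈ a.support, |a l| : ℝ) : ℂ) ^ 2) /
            ((-(nuHat a k) / (k : ℂ) ^ 2) *
              (4 * ((∑ l ∈ a.support, |a l| : ℝ) : ℂ) + nuHat a k))) *
          muHat c (-k) k ∧
    IntervalIntegrable (fun k : ℝ =>
        (piHat b k / (Complex.I * k)) * (piHat b (-k) / (Complex.I * (-k))) *
          ((4 * ((∑ l ∈ a.support, |a l| : ℝ) : ℂ) ^ 2) /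
            ((-(nuHat a k) / (k : ℂ) ^ 2) *
              (4 * ((∑ l ∈ a.support, |a l| : ℝ) : ℂ) + nuHat a k))) *
          muHat c (-k) k)
      MeasureTheory.volume (-(1/2 : ℝ)) (1/2 : ℝ) :=
  statement18_general a ha_symm ha0 (ha2 ▸ two_pos) ha_four b hb0 c (by rw [hε]; positivity)
end
end
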